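/- arXiv:1109.4505 — 9 statements merged into one kernel-verified Lean document; each statement's English description precedes it below -/
import Mathlib

section
/- Let G be a finite subgroup of Aut⁺(ℝⁿ). Then there exist a unique subgroup H of S_n and an element m ∈ (ℝ_{>0})ⁿ such that G = { m ∘ σ ∘ m⁻¹ : σ ∈ H } = m H m⁻¹, where m⁻¹ denotes the diagonal operator of the pointwise inverse of m. Conversely, for any subgroup H of S_n and any m ∈ (ℝ_{>0})ⁿ, the set m H m⁻¹ is a finite subgroup of Aut⁺(ℝⁿ). -/
/-- The multiplicative group of positive real numbers. -/
abbrev PosReal : Type := {x : ℝ // 0 < x}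

/-- The diagonal (multiplication) operator on `ℝⁿ` associated with a strictly positive
vector `m`. -/
noncomputable def diagEquiv (n : ℕ) (m : Fin n → PosReal) :
    (Fin n → ℝ) ≃ₗ[ℝ] (Fin n → ℝ) where
  toFun x := fun i => (m i : ℝ) * x i
  invFun y := fun i => (m i : ℝ)⁻¹ * y i
  map_add' x y := funext fun i => by dsimp; ring
  map_smul' c x := funext fun i => by dsimp; ring
  left_inv x := funext fun i => by
    have h : (m i : ℝ) ≠ 0 := (m i).2.ne'
    dsimp; field_simp
  right_inv y := funext fun i => by
    have h : (m i : ℝ) ≠ 0 := (m i).2.ne'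
    dsimp; field_simp

/-- The permutation operator on `ℝⁿ` associated with `σ ∈ Sₙ`; it maps `e_i` to
`e_{σ(i)}`. -/
noncomputable def permEquiv (n : ℕ) (σ : Equiv.Perm (Fin n)) :
    (Fin n → ℝ) ≃ₗ[ℝ] (Fin n → ℝ) where
  toFun x := fun i => x (σ⁻¹ i)
  invFun y := fun i => y (σ i)
  map_add' _ _ := rfl
  map_smul' _ _ := rfl
  left_inv x := funext fun i => by simp
  right_inv y := funext fun i => by simp

/-- `Aut⁺(ℝⁿ)`: the group of lattice automorphisms of `ℝⁿ`, i.e. linear bijections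
that are order isomorphisms for the coordinatewise order. -/
noncomputable def latticeAut (n : ℕ) : Subgroup ((Fin n → ℝ) ≃ₗ[ℝ] (Fin n → ℝ)) where
  carrier := {T | ∀ x y : Fin n → ℝ, x ≤ y ↔ T x ≤ T y}
  one_mem' := fun x y => Iff.rfl
  mul_mem' := by
    intro a b ha hb x y
    exact (hb x y).trans (ha (b x) (b y))
  inv_mem' := by
    intro a ha x y
    have := ha (a.symm x) (a.symm y)
    simpa using this.symm

/-- The action of `Sₙ` on the group `(ℝ_{>0})ⁿ`, `σ(m)_i = m_{σ⁻¹(i)}`. -/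
noncomputable def permMulAut (n : ℕ) : Equiv.Perm (Fin n) →* MulAut (Fin n → PosReal) where
  toFun σ :=
    { toFun := fun m i => m (σ⁻¹ i)
      invFun := fun m i => m (σ i)
      left_inv := fun m => funext fun i => by simp
      right_inv := fun m => funext fun i => by simp
      map_mul' := fun m₁ m₂ => rfl }
  map_one' := by ext m i; simp
  map_mul' σ τ := by ext m i; simp [mul_comm]


/-- Conjugated permutation representation. -/
noncomputable def conjPerm (n : ℕ) (m : Fin n → PosReal) :
    Equiv.Perm (Fin n) →* ((Fin n → ℝ) ≃ₗ[ℝ] (Fin n → ℝ)) where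
  toFun σ := diagEquiv n m * permEquiv n σ * (diagEquiv n m)⁻¹
  map_one' := by
    have : permEquiv n 1 = 1 := by
      apply LinearEquiv.ext; intro x; funext i; simp [permEquiv]
    rw [this]; group
  map_mul' σ τ := by
    have : permEquiv n (σ * τ) = permEquiv n σ * permEquiv n τ := by
      apply LinearEquiv.ext; intro x; funext i
      simp [permEquiv]
    rw [this]; group

theorem conjPerm_def (n : ℕ) (m : Fin n → PosReal) (σ : Equiv.Perm (Fin n)) :
    conjPerm n m σ = diagEquiv n m * permEquiv n σ * (diagEquiv n m)⁻¹ := rfl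

theorem conjPerm_apply (n : ℕ) (m : Fin n → PosReal) (σ : Equiv.Perm (Fin n))
    (x : Fin n → ℝ) (i : Fin n) :
    conjPerm n m σ x i = (m i : ℝ) * ((m (σ⁻¹ i) : ℝ)⁻¹ * x (σ⁻¹ i)) := rfl

theorem conjPerm_inj (n : ℕ) (m m' : Fin n → PosReal) (σ τ : Equiv.Perm (Fin n))
    (h : conjPerm n m σ = conjPerm n m' τ) : σ = τ := by
  have h2 : σ⁻¹ = τ⁻¹ := by
    ext1 i
    by_contra hne
    have h1 := congrFun (LinearEquiv.congr_fun h (Pi.single (σ⁻¹ i) 1)) i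
    rw [conjPerm_apply, conjPerm_apply, Pi.single_eq_same,
      Pi.single_eq_of_ne (fun h => hne h.symm)] at h1
    have a := (m i).2.ne'
    have b := (m (σ⁻¹ i)).2.ne'
    rw [mul_one, mul_zero, mul_zero] at h1
    exact mul_ne_zero a (inv_ne_zero b) h1
  exact inv_injective h2

theorem conjPerm_mem (n : ℕ) (m : Fin n → PosReal) (σ : Equiv.Perm (Fin n)) :
    conjPerm n m σ ∈ latticeAut n := by
  intro x y
  simp only [Pi.le_def, conjPerm_apply]
  have key : ∀ i, ((m i : ℝ) * ((m (σ⁻¹ i) : ℝ)⁻¹ * x (σ⁻¹ i)) ≤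
      (m i : ℝ) * ((m (σ⁻¹ i) : ℝ)⁻¹ * y (σ⁻¹ i))) ↔ x (σ⁻¹ i) ≤ y (σ⁻¹ i) := by
    intro i
    rw [mul_le_mul_iff_right₀ (m i).2, mul_le_mul_iff_right₀ (inv_pos.2 (m (σ⁻¹ i)).2)]
  simp only [key]
  exact ⟨fun h i => h _, fun h i => by simpa using h (σ i)⟩

theorem diag_mem (n : ℕ) (m : Fin n → PosReal) : diagEquiv n m ∈ latticeAut n := by
  intro x y
  simp only [Pi.le_def]
  exact forall_congr' fun i => (mul_le_mul_iff_right₀ (m i).2).symm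

theorem perm_of_fix_one (n : ℕ) (S : (Fin n → ℝ) ≃ₗ[ℝ] (Fin n → ℝ))
    (hS : S ∈ latticeAut n) (h1 : S 1 = 1) : ∃ σ, S = permEquiv n σ := by
  classical
  let O : (Fin n → ℝ) ≃o (Fin n → ℝ) := ⟨S.toEquiv, fun {a b} => (hS a b).symm⟩
  have hinf : ∀ x y, S (x ⊓ y) = S x ⊓ S y := fun x y => O.map_inf x y
  have hexp : ∀ x k, S x k = ∑ j, x j * S (Pi.single j 1) k := by
    intro x k
    conv_lhs => rw [pi_eq_sum_univ' x]
    simp only [map_sum, map_smul, Finset.sum_apply, Pi.smul_apply, smul_eq_mul]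
  have hdis : ∀ i j k, i ≠ j → S (Pi.single i 1) k = 0 ∨ S (Pi.single j 1) k = 0 := by
    intro i j k hij
    have h0 : (Pi.single i 1 ⊓ Pi.single j 1 : Fin n → ℝ) = 0 := by
      funext l
      simp only [Pi.inf_apply, Pi.single_apply, Pi.zero_apply]
      split_ifs <;> simp_all
    have h := congrFun (hinf (Pi.single i 1) (Pi.single j 1)) k
    rw [h0, map_zero, Pi.inf_apply, Pi.zero_apply] at h
    rcases min_choice (S (Pi.single i 1) k) (S (Pi.single j 1) k) with h' | h'
    · left; rw [← h']; exact h.symm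
    · right; rw [← h']; exact h.symm
  have hex : ∀ k, ∃ j, ∀ x, S x k = x j := by
    intro k
    have hs : ∑ j, S (Pi.single j 1) k = 1 := by
      have := hexp 1 k
      rw [h1] at this
      simpa using this.symm
    obtain ⟨j, -, hj⟩ := Finset.exists_ne_zero_of_sum_ne_zero (by rw [hs]; exact one_ne_zero)
    have hz : ∀ i, i ≠ j → S (Pi.single i 1) k = 0 := fun i hi =>
      (hdis i j k hi).resolve_right hj
    rw [Finset.sum_eq_single j (fun i _ hi => hz i hi) (by simp)] at hs
    refine ⟨j, fun x => ?_⟩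
    rw [hexp, Finset.sum_eq_single j (fun i _ hi => by rw [hz i hi, mul_zero]) (by simp), hs,
      mul_one]
  choose t ht using hex
  have hinj : Function.Injective t := by
    intro k l hkl
    by_contra hne
    obtain ⟨x, hx⟩ := S.surjective (Pi.single k 1)
    have a := ht k x
    have b := ht l x
    rw [hx, Pi.single_eq_same] at a
    rw [hx, Pi.single_eq_of_ne (Ne.symm hne), ← hkl, ← a] at b
    exact zero_ne_one b
  refine ⟨(Equiv.ofBijective t (Finite.injective_iff_bijective.1 hinj))⁻¹, ?_⟩
  apply LinearEquiv.ext; intro x; funext k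
  rw [ht]
  simp [permEquiv]

theorem exists_fixed (n : ℕ) (G : Subgroup ((Fin n → ℝ) ≃ₗ[ℝ] (Fin n → ℝ))) (hf : Finite G)
    (hG : G ≤ latticeAut n) : ∃ m : Fin n → PosReal, ∀ T ∈ G,
      T (fun i => (m i : ℝ)) = fun i => (m i : ℝ) := by
  have := Fintype.ofFinite G
  let v : Fin n → ℝ := ∑ g : G, g.1 1
  have hv : ∀ i, 0 < v i := by
    intro i
    have hnn : ∀ g : G, 0 ≤ g.1 1 := by
      intro g
      have := (hG g.2 0 1).1 zero_le_one
      rwa [map_zero] at this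
    have : (1 : G).1 1 ≤ v :=
      Finset.single_le_sum (f := fun g : G => g.1 1) (fun g _ => hnn g) (Finset.mem_univ 1)
    exact lt_of_lt_of_le one_pos (this i)
  refine ⟨fun i => ⟨v i, hv i⟩, fun T hT => ?_⟩
  change T v = v
  simp only [v, map_sum]
  exact Fintype.sum_equiv (Equiv.mulLeft (⟨T, hT⟩ : G)) _ _ (fun g => rfl)

/-- Every finite subgroup `G` of `Aut⁺(ℝⁿ)` is of the form `m H m⁻¹` for a unique
subgroup `H ⊆ Sₙ` and some strictly positive diagonal operator `m`; conversely every
set of this form is a finite subgroup of `Aut⁺(ℝⁿ)`. -/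
theorem stmt10 (n : ℕ) :
    (∀ G : Subgroup ((Fin n → ℝ) ≃ₗ[ℝ] (Fin n → ℝ)), Finite G → G ≤ latticeAut n →
      ∃! H : Subgroup (Equiv.Perm (Fin n)), ∃ m : Fin n → PosReal,
        ∀ T : (Fin n → ℝ) ≃ₗ[ℝ] (Fin n → ℝ),
          T ∈ G ↔ ∃ σ ∈ H, T = diagEquiv n m * permEquiv n σ * (diagEquiv n m)⁻¹) ∧
    (∀ (H : Subgroup (Equiv.Perm (Fin n))) (m : Fin n → PosReal),
      ∃ K : Subgroup ((Fin n → ℝ) ≃ₗ[ℝ] (Fin n → ℝ)), Finite K ∧ K ≤ latticeAut n ∧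
        ∀ T : (Fin n → ℝ) ≃ₗ[ℝ] (Fin n → ℝ),
          T ∈ K ↔ ∃ σ ∈ H, T = diagEquiv n m * permEquiv n σ * (diagEquiv n m)⁻¹) := by
  classical
  constructor
  · intro G hf hG
    obtain ⟨m, hm⟩ := exists_fixed n G hf hG
    refine ⟨G.comap (conjPerm n m), ⟨m, fun T => ?_⟩, ?_⟩
    · constructor
      · intro hT
        obtain ⟨σ, hσ⟩ := perm_of_fix_one n ((diagEquiv n m)⁻¹ * T * diagEquiv n m)
          (mul_mem (mul_mem (inv_mem (diag_mem n m)) (hG hT)) (diag_mem n m)) (by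
            have h1 : diagEquiv n m 1 = fun i => (m i : ℝ) := by
              funext i; simp [diagEquiv]
            change (diagEquiv n m).symm (T (diagEquiv n m 1)) = 1
            rw [h1, hm T hT, ← h1, LinearEquiv.symm_apply_apply])
        have hTe : T = diagEquiv n m * permEquiv n σ * (diagEquiv n m)⁻¹ := by
          rw [← hσ]; group
        refine ⟨σ, ?_, hTe⟩
        rw [Subgroup.mem_comap, conjPerm_def, ← hTe]
        exact hT
      · rintro ⟨σ, hσ, rfl⟩
        exact hσ
    · rintro H ⟨m', hm'⟩
      ext σ
      rw [Subgroup.mem_comap]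
      constructor
      · intro hσ
        -- `m' σ m'⁻¹ ∈ G`, so it is `m τ m⁻¹` for some `τ`
        have h := (hm' _).2 ⟨σ, hσ, rfl⟩
        obtain ⟨τ, hτ⟩ := perm_of_fix_one n
          ((diagEquiv n m)⁻¹ * (conjPerm n m' σ) * diagEquiv n m)
          (mul_mem (mul_mem (inv_mem (diag_mem n m)) (hG h)) (diag_mem n m)) (by
            have h1 : diagEquiv n m 1 = fun i => (m i : ℝ) := by
              funext i; simp [diagEquiv]
            change (diagEquiv n m).symm (conjPerm n m' σ (diagEquiv n m 1)) = 1
            rw [h1, conjPerm_def, hm _ h, ← h1, LinearEquiv.symm_apply_apply])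
        have hTe : conjPerm n m' σ = conjPerm n m τ := by
          rw [conjPerm_def n m, ← hτ]; group
        have e := conjPerm_inj n m' m σ τ hTe
        rw [← e] at hTe
        rw [← hTe]
        exact h
      · intro hσ
        obtain ⟨τ, hτ, e⟩ := (hm' _).1 hσ
        rw [conjPerm_inj n m m' σ τ e]
        exact hτ
  · intro H m
    refine ⟨H.map (conjPerm n m), ?_, ?_, fun T => ?_⟩
    · exact Set.Finite.to_subtype ((Set.toFinite (H : Set (Equiv.Perm (Fin n)))).image _)
    · rintro _ ⟨σ, -, rfl⟩
      exact conjPerm_mem n m σ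
    · constructor
      · rintro ⟨σ, hσ, rfl⟩
        exact ⟨σ, hσ, rfl⟩
      · rintro ⟨σ, hσ, rfl⟩
        exact ⟨σ, hσ, rfl⟩
end

section
/- Let H be a finite group acting by additive automorphisms on an abelian group (A, +) such that for every a ∈ A there exists a unique element, denoted a/|H|, with |H|·(a/|H|) = a. Let f : H → A be a map. Then f satisfies the crossed homomorphism identity f(st) = s·(f(t)) + f(s) for all s, t ∈ H if and only if there exists a ∈ A such that f(s) = a − s·a for all s ∈ H. -/
/-- If a finite group `H` acts by additive automorphisms on an abelian group `A` in
which division by `|H|` is uniquely possible, then a map `f : H → A` is a crossed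
homomorphism (`f(st) = s·f(t) + f(s)`) if and only if it is a principal crossed
homomorphism (`f(s) = a − s·a` for some `a ∈ A`). -/
theorem stmt11 {H A : Type*} [Group H] [Finite H] [AddCommGroup A]
    [DistribMulAction H A]
    (hdiv : ∀ a : A, ∃! b : A, Nat.card H • b = a)
    (f : H → A) :
    (∀ s t : H, f (s * t) = s • f t + f s) ↔ (∃ a : A, ∀ s : H, f s = a - s • a) := by
  constructor
  · intro h
    classical
    haveI := Fintype.ofFinite H
    obtain ⟨a, ha, -⟩ := hdiv (∑ t : H, f t)
    refine ⟨a, fun s => ?_⟩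
    have key : ∑ t : H, f t = s • (∑ t : H, f t) + Nat.card H • f s := by
      calc ∑ t : H, f t = ∑ t : H, f (s * t) :=
            (Equiv.sum_comp (Equiv.mulLeft s) f).symm
        _ = ∑ t : H, (s • f t + f s) := Finset.sum_congr rfl fun t _ => h s t
        _ = s • (∑ t : H, f t) + Nat.card H • f s := by
            rw [Finset.sum_add_distrib, Finset.smul_sum, Finset.sum_const,
              Finset.card_univ, Nat.card_eq_fintype_card]
    refine (hdiv (Nat.card H • f s)).unique rfl ?_
    have h2 : Nat.card H • (s • a) = s • (Nat.card H • a) :=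
      (map_nsmul (DistribSMul.toAddMonoidHom A s) (Nat.card H) a).symm
    rw [nsmul_sub, h2, ha, sub_eq_iff_eq_add']
    exact key
  · rintro ⟨a, ha⟩ s t
    rw [ha, ha, ha, smul_sub, mul_smul]
    abel
end

section
/- Let G be a finite group and ρ : G → Aut⁺(ℝⁿ) a positive representation. Then there exist a unique permutation representation π : G → S_n and an element m ∈ (ℝ_{>0})ⁿ such that ρ_s = m ∘ π_s ∘ m⁻¹ for all s ∈ G (where m⁻¹ denotes the diagonal operator of the pointwise inverse of m). Conversely, for any permutation representation π : G → S_n and any m ∈ (ℝ_{>0})ⁿ, the formula ρ_s = m ∘ π_s ∘ m⁻¹ defines a positive representation of G in ℝⁿ. -/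
/-- Structure of a single lattice automorphism. -/
theorem lattice_structure (n : ℕ) (T : (Fin n → ℝ) ≃ₗ[ℝ] (Fin n → ℝ))
    (hT : ∀ x y : Fin n → ℝ, x ≤ y ↔ T x ≤ T y) :
    ∃ (τ : Equiv.Perm (Fin n)) (c : Fin n → ℝ), (∀ k, 0 < c k) ∧
      ∀ x k, T x k = c k * x (τ k) := by
  have hnn : ∀ j k, 0 ≤ T (Pi.single j 1) k := by
    intro j k
    have h0 : (0 : Fin n → ℝ) ≤ Pi.single j 1 := by
      rw [Pi.single_nonneg]; exact zero_le_one
    have := (hT _ _).1 h0 k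
    simpa using this
  have hsum : ∀ x k, T x k = ∑ j, x j * T (Pi.single j 1) k := by
    intro x k
    conv_lhs => rw [pi_eq_sum_univ' x]
    simp [map_sum, Finset.sum_apply]
  have hex : ∀ k, ∃ j, 0 < T (Pi.single j 1) k := by
    intro k
    by_contra! h
    have h1 := hsum (T.symm (Pi.single k 1)) k
    rw [Finset.sum_eq_zero] at h1
    · simp at h1
    · intro j _
      rw [le_antisymm (h j) (hnn j k), mul_zero]
  have huniq : ∀ k i j, 0 < T (Pi.single i 1) k → 0 < T (Pi.single j 1) k → i = j := by
    intro k i j hi hj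
    by_contra hij
    let e : (Fin n → ℝ) ≃o (Fin n → ℝ) := ⟨T.toEquiv, fun {a b} => (hT a b).symm⟩
    have he : e (Pi.single i 1 ⊓ Pi.single j 1) = e (Pi.single i 1) ⊓ e (Pi.single j 1) :=
      map_inf e _ _
    have hz : (Pi.single i 1 ⊓ Pi.single j 1 : Fin n → ℝ) = 0 := by
      ext l
      simp only [Pi.inf_apply, Pi.single_apply, Pi.zero_apply]
      by_cases h1 : l = i
      · have h2 : l ≠ j := fun h => hij (h1.symm.trans h)
        simp [h1, hij]
      · rw [if_neg h1]
        by_cases h2 : l = j <;> simp [h2]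
    rw [hz] at he
    have h3 : T 0 k = T (Pi.single i 1) k ⊓ T (Pi.single j 1) k := congrFun he k
    rw [map_zero] at h3
    exact absurd h3 (lt_inf_iff.2 ⟨hi, hj⟩).ne
  choose τ hτ using hex
  have hform : ∀ x k, T x k = T (Pi.single (τ k) 1) k * x (τ k) := by
    intro x k
    rw [hsum x k, Finset.sum_eq_single (τ k), mul_comm]
    · intro j _ hj
      have : T (Pi.single j 1) k = 0 := by
        by_contra h
        exact hj (huniq k _ _ (lt_of_le_of_ne (hnn j k) (Ne.symm h)) (hτ k))
      rw [this, mul_zero]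
    · simp
  have hinj : Function.Injective τ := by
    intro k l hkl
    by_contra hne
    have h1 := hform (T.symm (Pi.single k 1)) k
    have h2 := hform (T.symm (Pi.single k 1)) l
    rw [LinearEquiv.apply_symm_apply] at h1 h2
    rw [Pi.single_eq_of_ne (Ne.symm hne), ← hkl] at h2
    have h3 := hτ l
    rw [← hkl] at h3
    have h4 : T.symm (Pi.single k 1) (τ k) = 0 := by
      rcases mul_eq_zero.1 h2.symm with h | h
      · exact absurd h h3.ne'
      · exact h
    rw [h4] at h1
    simp at h1
  exact ⟨Equiv.ofBijective τ (Finite.injective_iff_bijective.1 hinj),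
    fun k => T (Pi.single (τ k) 1) k, hτ, hform⟩

theorem eval_unique {n : ℕ} {c d : ℝ} {a b : Fin n} (hc : 0 < c)
    (h : ∀ x : Fin n → ℝ, c * x a = d * x b) : a = b ∧ c = d := by
  have hab : a = b := by
    by_contra hne
    have := h (Pi.single a 1)
    rw [Pi.single_eq_same, Pi.single_eq_of_ne (Ne.symm hne)] at this
    simp at this
    exact hc.ne' this
  refine ⟨hab, ?_⟩
  have := h (fun _ => 1)
  simpa using this

theorem conj_apply (n : ℕ) (m : Fin n → PosReal) (σ : Equiv.Perm (Fin n)) (x : Fin n → ℝ)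
    (k : Fin n) : (diagEquiv n m * permEquiv n σ * (diagEquiv n m)⁻¹) x k =
      (m k : ℝ) * ((m (σ⁻¹ k) : ℝ)⁻¹ * x (σ⁻¹ k)) := rfl

/-- Every positive representation `ρ` of a finite group `G` in `ℝⁿ` is of the form
`ρ_s = m ∘ π_s ∘ m⁻¹` for a unique permutation representation `π : G → Sₙ` and some
`m ∈ (ℝ_{>0})ⁿ`; conversely every such formula defines a positive representation. -/
theorem stmt12 {G : Type*} [Group G] [Finite G] (n : ℕ) :
    (∀ ρ : G →* ((Fin n → ℝ) ≃ₗ[ℝ] (Fin n → ℝ)),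
      (∀ (s : G) (x y : Fin n → ℝ), x ≤ y ↔ ρ s x ≤ ρ s y) →
      ∃! π : G →* Equiv.Perm (Fin n), ∃ m : Fin n → PosReal,
        ∀ s : G, ρ s = diagEquiv n m * permEquiv n (π s) * (diagEquiv n m)⁻¹) ∧
    (∀ (π : G →* Equiv.Perm (Fin n)) (m : Fin n → PosReal),
      ∃ ρ : G →* ((Fin n → ℝ) ≃ₗ[ℝ] (Fin n → ℝ)),
        (∀ s : G, ρ s = diagEquiv n m * permEquiv n (π s) * (diagEquiv n m)⁻¹) ∧
        ∀ (s : G) (x y : Fin n → ℝ), x ≤ y ↔ ρ s x ≤ ρ s y) := by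
  constructor
  · intro ρ hρ
    choose τ c hc hform using fun s => lattice_structure n (ρ s) (hρ s)
    have hmul : ∀ s t k, τ t (τ s k) = τ (s * t) k ∧ c s k * c t (τ s k) = c (s * t) k := by
      intro s t k
      refine eval_unique (mul_pos (hc _ _) (hc _ _)) fun x => ?_
      rw [← hform (s * t) x k, map_mul, LinearEquiv.mul_apply, hform s, hform t, mul_assoc]
    let π : G →* Equiv.Perm (Fin n) := MonoidHom.mk' (fun s => (τ s)⁻¹) (by
      intro s t
      rw [← mul_inv_rev]
      congr 1
      ext k
      rw [Equiv.Perm.mul_apply, (hmul s t k).1])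
    have hπ : ∀ s k, (π s)⁻¹ k = τ s k := fun s k => by
      change ((τ s)⁻¹)⁻¹ k = τ s k
      rw [inv_inv]
    refine ⟨π, ?_, ?_⟩
    · have := Fintype.ofFinite G
      refine ⟨fun k => ⟨∑ t, c t k, Finset.sum_pos (fun t _ => hc t k) Finset.univ_nonempty⟩, ?_⟩
      intro s
      ext1 x
      funext k
      rw [conj_apply, hform, hπ]
      have hm : c s k * ∑ t, c t (τ s k) = ∑ t, c t k := by
        rw [Finset.mul_sum, ← Equiv.sum_comp (Equiv.mulLeft s) (fun t => c t k)]
        exact Finset.sum_congr rfl fun t _ => (hmul s t k).2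
      have hp : 0 < ∑ t, c t (τ s k) :=
        Finset.sum_pos (fun t _ => hc t _) Finset.univ_nonempty
      dsimp only
      rw [← hm]
      field_simp
    · rintro π' ⟨m, hm⟩
      ext1 s
      apply inv_injective
      apply Equiv.ext
      intro k
      rw [hπ]
      symm
      refine (eval_unique (hc s k) (d := (m k : ℝ) * (m ((π' s)⁻¹ k) : ℝ)⁻¹) fun x => ?_).1
      rw [← hform, hm, conj_apply, mul_assoc]
  · intro π m
    refine ⟨MonoidHom.mk' (fun s => diagEquiv n m * permEquiv n (π s) * (diagEquiv n m)⁻¹) ?_,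
      fun s => rfl, ?_⟩
    · intro s t
      have : permEquiv n (π (s * t)) = permEquiv n (π s) * permEquiv n (π t) := by
        ext1 x
        funext k
        change x ((π (s * t))⁻¹ k) = x ((π t)⁻¹ ((π s)⁻¹ k))
        rw [map_mul, mul_inv_rev, Equiv.Perm.mul_apply]
      rw [this]
      group
    · intro s x y
      simp only [MonoidHom.mk'_apply, Pi.le_def, conj_apply]
      have key : ∀ k, (m k : ℝ) * ((m ((π s)⁻¹ k) : ℝ)⁻¹ * x ((π s)⁻¹ k)) ≤
          (m k : ℝ) * ((m ((π s)⁻¹ k) : ℝ)⁻¹ * y ((π s)⁻¹ k)) ↔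
          x ((π s)⁻¹ k) ≤ y ((π s)⁻¹ k) := fun k => by
        rw [mul_le_mul_iff_right₀ (m k).2, mul_le_mul_iff_right₀ (inv_pos.2 (m _).2)]
      simp only [key]
      constructor
      · intro h k
        exact h _
      · intro h k
        simpa using h (π s k)
end

section
/- Let G be a finite group and let ρ¹, ρ² : G → Aut⁺(ℝⁿ) be positive representations with ρ¹_s = m₁ ∘ π¹_s ∘ m₁⁻¹ and ρ²_s = m₂ ∘ π²_s ∘ m₂⁻¹ for all s ∈ G, where m₁, m₂ ∈ (ℝ_{>0})ⁿ and π¹, π² : G → S_n are permutation representations. Then ρ¹ and ρ² are order equivalent if and only if π¹ and π² are permutation equivalent, i.e., there exists σ ∈ S_n with σ ∘ π²_s = π¹_s ∘ σ for all s ∈ G. -/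
theorem diag_single (n : ℕ) (m : Fin n → PosReal) (j : Fin n) (c : ℝ) :
    diagEquiv n m (Pi.single j c) = Pi.single j ((m j : ℝ) * c) := by
  funext i
  change (m i : ℝ) * (Pi.single j c : Fin n → ℝ) i = _
  by_cases h : i = j
  · subst h; simp
  · simp [h]

theorem diag_inv_single (n : ℕ) (m : Fin n → PosReal) (j : Fin n) (c : ℝ) :
    (diagEquiv n m)⁻¹ (Pi.single j c) = Pi.single j ((m j : ℝ)⁻¹ * c) := by
  funext i
  change (m i : ℝ)⁻¹ * (Pi.single j c : Fin n → ℝ) i = _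
  by_cases h : i = j
  · subst h; simp
  · simp [h]

theorem perm_single (n : ℕ) (σ : Equiv.Perm (Fin n)) (j : Fin n) (c : ℝ) :
    permEquiv n σ (Pi.single j c) = Pi.single (σ j) c := by
  funext i
  change (Pi.single j c : Fin n → ℝ) (σ⁻¹ i) = _
  by_cases h : i = σ j
  · subst h; simp
  · have h' : σ⁻¹ i ≠ j := fun e => h (by simp [← e])
    rw [Pi.single_eq_of_ne h', Pi.single_eq_of_ne h]

theorem rep_single (n : ℕ) (m : Fin n → PosReal) (σ : Equiv.Perm (Fin n)) (j : Fin n) (c : ℝ) :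
    (diagEquiv n m * permEquiv n σ * (diagEquiv n m)⁻¹) (Pi.single j c) =
      Pi.single (σ j) ((m (σ j) : ℝ) * ((m j : ℝ)⁻¹ * c)) := by
  rw [LinearEquiv.mul_apply, LinearEquiv.mul_apply, diag_inv_single, perm_single, diag_single]

theorem perm_mul (n : ℕ) (σ τ : Equiv.Perm (Fin n)) :
    permEquiv n (σ * τ) = permEquiv n σ * permEquiv n τ := by
  ext x i
  rw [LinearEquiv.mul_apply]
  change x ((σ * τ)⁻¹ i) = x (τ⁻¹ (σ⁻¹ i))
  rw [mul_inv_rev, Equiv.Perm.mul_apply]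

theorem order_single (n : ℕ) (T : (Fin n → ℝ) ≃ₗ[ℝ] (Fin n → ℝ))
    (hT : ∀ x y : Fin n → ℝ, x ≤ y ↔ T x ≤ T y) (j : Fin n) :
    ∃ i : Fin n, ∃ c : ℝ, c ≠ 0 ∧ T (Pi.single j 1) = Pi.single i c := by
  have h0 : (0 : Fin n → ℝ) ≤ T (Pi.single j 1) := by
    have := (hT 0 (Pi.single j 1)).1 (Pi.single_nonneg.2 zero_le_one)
    simpa using this
  have hne : T (Pi.single j 1) ≠ 0 := by
    simp
  obtain ⟨i, hi⟩ := Function.ne_iff.1 hne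
  have hle : (Pi.single i (T (Pi.single j 1) i) : Fin n → ℝ) ≤ T (Pi.single j 1) := by
    intro k
    by_cases h : k = i
    · subst h; simp
    · simpa [h] using h0 k
  set a := T (Pi.single j 1) i with ha
  set v := T.symm (Pi.single i a) with hv
  have hTv : T v = Pi.single i a := by simp [hv]
  have hv0 : 0 ≤ v := by
    rw [hT, hTv, map_zero]
    exact Pi.single_nonneg.2 (h0 i)
  have hv1 : v ≤ Pi.single j 1 := by
    rw [hT, hTv]; exact hle
  have hvs : v = v j • (Pi.single j 1 : Fin n → ℝ) := by
    funext k
    by_cases h : k = j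
    · subst h; simp
    · have h1 := hv1 k
      have h2 := hv0 k
      simp [h] at h1 h2 ⊢
      exact le_antisymm h1 h2
  have hE : v j • T (Pi.single j 1) = Pi.single i a := by
    rw [← map_smul, ← hvs, hTv]
  have ha0 : a ≠ 0 := hi
  have hb : v j ≠ 0 := by
    intro hb
    rw [hb, zero_smul] at hE
    exact ha0 (Pi.single_eq_zero_iff.1 hE.symm)
  refine ⟨i, (v j)⁻¹ * a, mul_ne_zero (inv_ne_zero hb) ha0, ?_⟩
  calc T (Pi.single j 1) = (v j)⁻¹ • (v j • T (Pi.single j 1)) := by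
        rw [smul_smul, inv_mul_cancel₀ hb, one_smul]
    _ = _ := by rw [hE, ← Pi.single_smul, smul_eq_mul]

theorem single_index (n : ℕ) {i j : Fin n} {c d : ℝ} (hc : c ≠ 0)
    (h : (Pi.single i c : Fin n → ℝ) = Pi.single j d) : i = j := by
  by_contra hij
  have := congrFun h i
  rw [Pi.single_eq_same, Pi.single_eq_of_ne hij] at this
  exact hc this

theorem single_one_smul (n : ℕ) (i : Fin n) (c : ℝ) :
    (Pi.single i c : Fin n → ℝ) = c • Pi.single i 1 := by
  rw [← Pi.single_smul, smul_eq_mul, mul_one]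

/-- Two positive representations `ρ¹ ∼ (m₁, π¹)` and `ρ² ∼ (m₂, π²)` of a finite group
in `ℝⁿ` are order equivalent if and only if the permutation representations `π¹` and
`π²` are permutation equivalent. -/
theorem stmt13 {G : Type*} [Group G] [Finite G] (n : ℕ)
    (ρ₁ ρ₂ : G →* ((Fin n → ℝ) ≃ₗ[ℝ] (Fin n → ℝ)))
    (m₁ m₂ : Fin n → PosReal) (π₁ π₂ : G →* Equiv.Perm (Fin n))
    (h₁ : ∀ s : G, ρ₁ s = diagEquiv n m₁ * permEquiv n (π₁ s) * (diagEquiv n m₁)⁻¹)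
    (h₂ : ∀ s : G, ρ₂ s = diagEquiv n m₂ * permEquiv n (π₂ s) * (diagEquiv n m₂)⁻¹) :
    (∃ T : (Fin n → ℝ) ≃ₗ[ℝ] (Fin n → ℝ),
      (∀ x y : Fin n → ℝ, x ≤ y ↔ T x ≤ T y) ∧ ∀ s : G, T * ρ₂ s = ρ₁ s * T) ↔
    (∃ σ : Equiv.Perm (Fin n), ∀ s : G, σ * π₂ s = π₁ s * σ) := by
  constructor
  · rintro ⟨T, hT, hI⟩
    choose f c hc hf using order_single n T hT
    have hf' : ∀ j d, T (Pi.single j d) = Pi.single (f j) (d * c j) := by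
      intro j d
      rw [single_one_smul, map_smul, hf, ← Pi.single_smul, smul_eq_mul]
    have hinj : Function.Injective f := by
      intro j k hjk
      have : T (Pi.single j (c k)) = T (Pi.single k (c j)) := by
        rw [hf', hf', hjk, mul_comm]
      exact single_index n (hc k) (T.injective this)
    refine ⟨Equiv.ofBijective f (Finite.injective_iff_bijective.1 hinj), fun s => ?_⟩
    ext1 j
    have h := LinearEquiv.congr_fun (hI s) (Pi.single j 1)
    rw [LinearEquiv.mul_apply, LinearEquiv.mul_apply, h₁, h₂, rep_single, hf', hf,
      rep_single] at h
    rw [Equiv.Perm.mul_apply, Equiv.Perm.mul_apply, Equiv.ofBijective_apply,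
      Equiv.ofBijective_apply]
    refine single_index n ?_ h
    have e1 := (m₂ (π₂ s j)).2.ne'
    have e2 := (m₂ j).2.ne'
    exact mul_ne_zero (mul_ne_zero e1 (mul_ne_zero (inv_ne_zero e2) one_ne_zero)) (hc _)
  · rintro ⟨σ, hσ⟩
    refine ⟨diagEquiv n m₁ * permEquiv n σ * (diagEquiv n m₂)⁻¹, fun x y => ?_, fun s => ?_⟩
    · change _ ↔ (fun i => (m₁ i : ℝ) * ((m₂ (σ⁻¹ i) : ℝ)⁻¹ * x (σ⁻¹ i))) ≤
        (fun i => (m₁ i : ℝ) * ((m₂ (σ⁻¹ i) : ℝ)⁻¹ * y (σ⁻¹ i)))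
      have key : ∀ i, (m₁ i : ℝ) * ((m₂ (σ⁻¹ i) : ℝ)⁻¹ * x (σ⁻¹ i)) ≤
          (m₁ i : ℝ) * ((m₂ (σ⁻¹ i) : ℝ)⁻¹ * y (σ⁻¹ i)) ↔ x (σ⁻¹ i) ≤ y (σ⁻¹ i) := fun i => by
        rw [mul_le_mul_iff_right₀ (m₁ i).2, mul_le_mul_iff_right₀ (inv_pos.2 (m₂ (σ⁻¹ i)).2)]
      constructor
      · intro h i
        exact (key i).2 (h _)
      · intro h i
        have := (key (σ i)).1 (h (σ i))
        simpa using this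
    · rw [h₁, h₂]
      have := hσ s
      have h3 : permEquiv n σ * permEquiv n (π₂ s) = permEquiv n (π₁ s) * permEquiv n σ := by
        rw [← perm_mul, ← perm_mul, this]
      calc _ = diagEquiv n m₁ * (permEquiv n σ * permEquiv n (π₂ s)) * (diagEquiv n m₂)⁻¹ := by
            group
        _ = _ := by rw [h3]; group
end

section
/- Let G be a finite group and ρ : G → Aut⁺(ℝⁿ) a positive representation. Then ρ is order equivalent to a permutation representation of G, i.e., there exist a group homomorphism π : G → S_n and a lattice isomorphism T of ℝⁿ with T ∘ ρ_s = π_s ∘ T for all s ∈ G. -/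
theorem key_aux (n : ℕ) (A : (Fin n → ℝ) ≃ₗ[ℝ] (Fin n → ℝ))
    (hA : ∀ x y : Fin n → ℝ, x ≤ y ↔ A x ≤ A y) (u : Fin n → ℝ) (hu : ∀ i, 0 < u i)
    (hAu : A u = u) (j : Fin n) :
    ∃ i, ∀ x, (u j)⁻¹ * A x j = (u i)⁻¹ * x i := by
  have hsum : ∀ x, A x j = ∑ i, x i * A (Pi.single i 1) j := by
    intro x
    conv_lhs => rw [pi_eq_sum_univ' x]
    simp [map_sum, Finset.sum_apply]
  let O : (Fin n → ℝ) ≃o (Fin n → ℝ) := ⟨A.toEquiv, fun {x y} => (hA x y).symm⟩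
  have hdis : ∀ i k, i ≠ k → A (Pi.single i 1) j ⊓ A (Pi.single k 1) j = 0 := by
    intro i k hik
    have h1 := O.map_inf (Pi.single i 1) (Pi.single k 1)
    have h2 : (Pi.single i 1 : Fin n → ℝ) ⊓ Pi.single k 1 = 0 := by
      ext l
      by_cases h : l = i
      · subst h; simp [hik]
      · by_cases h' : l = k
        · subst h'; simp [h]
        · simp [h, h']
    rw [h2] at h1
    have h3 : A 0 = A (Pi.single i 1) ⊓ A (Pi.single k 1) := h1
    rw [map_zero] at h3
    exact (congrFun h3 j).symm
  have huj := hsum u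
  rw [hAu] at huj
  obtain ⟨i, -, hi⟩ : ∃ i ∈ Finset.univ, u i * A (Pi.single i 1) j ≠ 0 :=
    Finset.exists_ne_zero_of_sum_ne_zero (huj ▸ (hu j).ne')
  have hpos : ∀ k, 0 ≤ A (Pi.single k 1) j := by
    intro k
    have := (hA 0 (Pi.single k 1)).1 (Pi.single_nonneg.2 zero_le_one) j
    simpa using this
  have hi' : A (Pi.single i 1) j ≠ 0 := right_ne_zero_of_mul hi
  have hz : ∀ k, k ≠ i → A (Pi.single k 1) j = 0 := by
    intro k hk
    have h := hdis i k hk.symm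
    rcases min_choice (A (Pi.single i 1) j) (A (Pi.single k 1) j) with h' | h'
    · exact absurd (h'.symm.trans h) hi'
    · exact h'.symm.trans h
  have hx : ∀ x, A x j = x i * A (Pi.single i 1) j := by
    intro x
    rw [hsum x]
    exact Finset.sum_eq_single i (fun k _ hk => by rw [hz k hk, mul_zero]) (by simp)
  refine ⟨i, fun x => ?_⟩
  have h4 := hx u
  rw [hAu] at h4
  have := (hu i).ne'
  rw [hx x, h4]
  field_simp

/-- Every positive representation of a finite group in `ℝⁿ` is order equivalent to a
permutation representation. -/
theorem stmt14 {G : Type*} [Group G] [Finite G] (n : ℕ)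
    (ρ : G →* ((Fin n → ℝ) ≃ₗ[ℝ] (Fin n → ℝ)))
    (hρ : ∀ (s : G) (x y : Fin n → ℝ), x ≤ y ↔ ρ s x ≤ ρ s y) :
    ∃ (π : G →* Equiv.Perm (Fin n)) (T : (Fin n → ℝ) ≃ₗ[ℝ] (Fin n → ℝ)),
      (∀ x y : Fin n → ℝ, x ≤ y ↔ T x ≤ T y) ∧
      ∀ (s : G) (x : Fin n → ℝ), T (ρ s x) = permEquiv n (π s) (T x) := by
  classical
  have := Fintype.ofFinite G
  let u : Fin n → ℝ := ∑ s, ρ s 1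
  have hinv : ∀ s, ρ s u = u := by
    intro s
    simp only [u, map_sum]
    rw [← Equiv.sum_comp (Equiv.mulLeft s) (fun t => ρ t 1)]
    simp
  have hu : ∀ i, 0 < u i := by
    intro i
    simp only [u, Finset.sum_apply]
    refine Finset.sum_pos' (fun s _ => ?_) ⟨1, Finset.mem_univ _, by simp⟩
    have := (hρ s 0 1).1 zero_le_one i
    simpa using this
  choose f hf using fun s j => key_aux n (ρ s) (hρ s) u hu (hinv s) j
  have hinj : ∀ i k : Fin n, (∀ x : Fin n → ℝ, (u i)⁻¹ * x i = (u k)⁻¹ * x k) → i = k := by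
    intro i k h
    by_contra hik
    have := h (Pi.single i 1)
    simp [Ne.symm hik, (hu i).ne'] at this
  have hone : ∀ j, f 1 j = j := by
    intro j
    refine hinj _ _ fun x => ?_
    rw [← hf 1 j x]; simp
  have hmul : ∀ s t j, f (s * t) j = f t (f s j) := by
    intro s t j
    refine hinj _ _ fun x => ?_
    rw [← hf (s * t) j x, ← hf t, ← hf s]; simp
  let π : G →* Equiv.Perm (Fin n) :=
    { toFun := fun s =>
        { toFun := f s⁻¹
          invFun := f s
          left_inv := fun j => by rw [← hmul]; simp [hone]
          right_inv := fun j => by rw [← hmul]; simp [hone] }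
      map_one' := by ext j; simp [hone]
      map_mul' := fun s t => by ext j; simp [hmul] }
  refine ⟨π, diagEquiv n (fun i => ⟨(u i)⁻¹, inv_pos.2 (hu i)⟩), fun x y => ?_, fun s x => ?_⟩
  · refine forall_congr' fun i => ?_
    exact (mul_le_mul_iff_right₀ (inv_pos.2 (hu i))).symm
  · funext j
    exact hf s j x
end

section
/- Let G be a finite group, E a nonzero finite dimensional Archimedean Riesz space, and ρ : G → Aut⁺(E) a positive representation. Let {B_i}_{i ∈ I} be the set of all irreducible ρ-invariant bands of E, i.e., nonzero ρ-invariant bands B such that the only ρ-invariant bands contained in B are {0} and B. Then E is the order direct sum ⊕_{i ∈ I} B_i, and every ρ-invariant band of E equals the direct sum of those B_i that it contains. -/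
/-- A (Riesz) ideal of an ordered real vector space: a submodule `I` such that
`|x| ≤ |y|` and `y ∈ I` imply `x ∈ I`. -/
def IsRieszIdeal {E : Type*} [AddCommGroup E] [Lattice E] [Module ℝ E]
    (I : Submodule ℝ E) : Prop :=
  ∀ x y : E, |x| ≤ |y| → y ∈ I → x ∈ I

/-- A band: an ideal closed under suprema of its subsets (when they exist in `E`). -/
def IsBand {E : Type*} [AddCommGroup E] [Lattice E] [Module ℝ E]
    (B : Submodule ℝ E) : Prop :=
  IsRieszIdeal B ∧ ∀ (D : Set E) (x : E), D ⊆ (B : Set E) → IsLUB D x → x ∈ B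

/-- The disjoint complement of a set `D`. -/
def disjComplement {E : Type*} [AddCommGroup E] [Lattice E] (D : Set E) : Set E :=
  {x : E | ∀ y ∈ D, |x| ⊓ |y| = 0}

/-- A projection band: a band `B` with `E = B ⊕ Bᵈ`. -/
def IsProjectionBand {E : Type*} [AddCommGroup E] [Lattice E] [Module ℝ E]
    (B : Submodule ℝ E) : Prop :=
  IsBand B ∧ ∀ x : E, ∃ y ∈ B, ∃ z ∈ disjComplement (B : Set E), x = y + z

/-- An order direct sum decomposition `E = L ⊕ M`: every element decomposes uniquely
as a sum of an element of `L` and an element of `M`, and an element is positive iff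
both its components are positive. -/
def IsOrderDecomposition {E : Type*} [AddCommGroup E] [Lattice E] [Module ℝ E]
    (L M : Submodule ℝ E) : Prop :=
  (∀ x : E, ∃ y ∈ L, ∃ z ∈ M, x = y + z) ∧
  (∀ x : E, x ∈ L → x ∈ M → x = 0) ∧
  (∀ y z : E, y ∈ L → z ∈ M → (0 ≤ y + z ↔ 0 ≤ y ∧ 0 ≤ z))

/-- A homomorphism `ρ : G →* (E ≃ₗ[ℝ] E)` is a positive representation when each
`ρ s` is an order isomorphism (hence a lattice automorphism). -/
def IsPositiveRep {E : Type*} [AddCommGroup E] [Lattice E] [Module ℝ E]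
    {G : Type*} [Group G] (ρ : G →* (E ≃ₗ[ℝ] E)) : Prop :=
  ∀ (s : G) (x y : E), x ≤ y ↔ ρ s x ≤ ρ s y

/-- A submodule is `ρ`-invariant if it is mapped into itself by every `ρ s`. -/
def InvariantSubmodule {E : Type*} [AddCommGroup E] [Lattice E] [Module ℝ E]
    {G : Type*} [Group G] (ρ : G →* (E ≃ₗ[ℝ] E)) (B : Submodule ℝ E) : Prop :=
  ∀ (s : G), ∀ x ∈ B, ρ s x ∈ B

/-- `ρ` is order indecomposable if the only `ρ`-invariant order direct sum
decompositions `E = L ⊕ M` are the trivial ones. -/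
def OrderIndecomposable {E : Type*} [AddCommGroup E] [Lattice E] [Module ℝ E]
    {G : Type*} [Group G] (ρ : G →* (E ≃ₗ[ℝ] E)) : Prop :=
  ∀ L M : Submodule ℝ E, IsOrderDecomposition L M →
    InvariantSubmodule ρ L → InvariantSubmodule ρ M → L = ⊥ ∨ L = ⊤

/-- `ρ` is projection band irreducible if the only `ρ`-invariant projection bands
are `{0}` and `E`. -/
def ProjectionBandIrreducible {E : Type*} [AddCommGroup E] [Lattice E] [Module ℝ E]
    {G : Type*} [Group G] (ρ : G →* (E ≃ₗ[ℝ] E)) : Prop :=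
  ∀ B : Submodule ℝ E, IsProjectionBand B → InvariantSubmodule ρ B → B = ⊥ ∨ B = ⊤


/-- `E` is Archimedean: if `0 ≤ n • x ≤ y` for all positive integers `n`, then `x = 0`. -/
def RieszArchimedean (E : Type*) [AddCommGroup E] [Lattice E] [Module ℝ E] : Prop :=
  ∀ x y : E, (∀ n : ℕ, 0 < n → 0 ≤ n • x ∧ n • x ≤ y) → x = 0

/-- `E` is the internal order direct sum of the family of submodules `B i`: every
element of `E` is uniquely a finite sum of elements of the `B i`, and such a sum is
positive if and only if all its terms are positive. -/
def IsInternalOrderDirectSum {E : Type*} [AddCommGroup E] [Lattice E] [Module ℝ E]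
    {ι : Type*} (B : ι → Submodule ℝ E) : Prop :=
  (∀ x : E, ∃ f : ι →₀ E, (∀ i, f i ∈ B i) ∧ f.sum (fun _ v => v) = x) ∧
  (∀ f : ι →₀ E, (∀ i, f i ∈ B i) → f.sum (fun _ v => v) = 0 → f = 0) ∧
  (∀ f : ι →₀ E, (∀ i, f i ∈ B i) → (0 ≤ f.sum (fun _ v => v) ↔ ∀ i, 0 ≤ f i))

/-- An irreducible invariant band: a nonzero `ρ`-invariant band `B` such that the only
`ρ`-invariant bands contained in `B` are `{0}` and `B`. -/
def IsIrreducibleInvariantBand {E : Type*} [AddCommGroup E] [Lattice E] [Module ℝ E]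
    {G : Type*} [Group G] (ρ : G →* (E ≃ₗ[ℝ] E)) (B : Submodule ℝ E) : Prop :=
  IsBand B ∧ InvariantSubmodule ρ B ∧ B ≠ ⊥ ∧
    ∀ C : Submodule ℝ E, IsBand C → InvariantSubmodule ρ C → C ≤ B → C = ⊥ ∨ C = B

namespace RieszAux

set_option linter.unusedSectionVars false

section
variable {E : Type*} [AddCommGroup E] [Lattice E] [Module ℝ E]
  [IsOrderedAddMonoid E] [PosSMulMono ℝ E]

lemma smul_mono_left {c d : ℝ} {x : E} (h : c ≤ d) (hx : 0 ≤ x) : c • x ≤ d • x := by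
  have : 0 ≤ (d - c) • x := smul_nonneg (sub_nonneg.2 h) hx
  rw [sub_smul] at this
  exact sub_nonneg.1 this

lemma abs_smul_le' (c : ℝ) (x : E) : |c • x| ≤ |c| • |x| := by
  have key : ∀ (c : ℝ) (x : E), c • x ≤ |c| • |x| := by
    intro c x
    rcases le_total 0 c with h | h
    · rw [abs_of_nonneg h]
      exact smul_le_smul_of_nonneg_left (le_abs_self x) h
    · rw [abs_of_nonpos h]
      have : (-c) • (-x) ≤ (-c) • |x| :=
        smul_le_smul_of_nonneg_left (neg_le_abs x) (by linarith)
      simpa using this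
  apply sup_le (key c x)
  have := key (-c) x
  simpa using this

lemma disj_add {a b c : E} (hb : 0 ≤ b) (hc : 0 ≤ c) (ha : 0 ≤ a)
    (h1 : a ⊓ c = 0) (h2 : b ⊓ c = 0) : (a + b) ⊓ c = 0 := by
  apply le_antisymm
  · have h3 : (a + b) ⊓ c - b ≤ a ⊓ c := by
      apply le_inf
      · rw [sub_le_iff_le_add]; exact inf_le_left
      · rw [sub_le_iff_le_add]
        exact inf_le_right.trans (le_add_of_nonneg_right hb)
    rw [h1, sub_nonpos] at h3
    rw [← h2]
    exact le_inf h3 inf_le_right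
  · exact le_inf (add_nonneg ha hb) hc

lemma disj_mono {a b c : E} (h : a ≤ b) (ha : 0 ≤ a) (hc : 0 ≤ c)
    (h2 : b ⊓ c = 0) : a ⊓ c = 0 :=
  le_antisymm (h2 ▸ inf_le_inf_right c h) (le_inf ha hc)

lemma disj_nsmul {a c : E} (ha : 0 ≤ a) (hc : 0 ≤ c)
    (h : a ⊓ c = 0) (n : ℕ) : (n • a) ⊓ c = 0 := by
  induction n with
  | zero => simpa using hc
  | succ n ih =>
    rw [succ_nsmul]
    exact disj_add ha hc (nsmul_nonneg ha n) ih h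

lemma disj_smul {a c : E} (ha : 0 ≤ a) (hc : 0 ≤ c)
    (h : a ⊓ c = 0) (t : ℝ) (ht : 0 ≤ t) : (t • a) ⊓ c = 0 := by
  obtain ⟨n, hn⟩ := exists_nat_ge t
  refine disj_mono ?_ (smul_nonneg ht ha) hc (disj_nsmul ha hc h n)
  rw [← Nat.cast_smul_eq_nsmul ℝ]
  exact smul_mono_left hn ha

/-- The disjoint complement as a submodule. -/
def dc (D : Set E) : Submodule ℝ E where
  carrier := disjComplement D
  zero_mem' := by
    intro y _
    simp
  add_mem' := by
    intro a b ha hb y hy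
    exact disj_mono (abs_add_le a b) (abs_nonneg _) (abs_nonneg _)
      (disj_add (abs_nonneg _) (abs_nonneg _) (abs_nonneg _) (ha y hy) (hb y hy))
  smul_mem' := by
    intro c x hx y hy
    exact disj_mono (abs_smul_le' c x) (abs_nonneg _) (abs_nonneg _)
      (disj_smul (abs_nonneg _) (abs_nonneg _) (hx y hy) _ (abs_nonneg c))

lemma mem_dc {D : Set E} {x : E} : x ∈ dc D ↔ ∀ y ∈ D, |x| ⊓ |y| = 0 := Iff.rfl

lemma dc_ideal (D : Set E) : IsRieszIdeal (dc D) := by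
  intro x y hxy hy z hz
  exact disj_mono hxy (abs_nonneg _) (abs_nonneg _) (hy z hz)

lemma ideal_abs {I : Submodule ℝ E} (hI : IsRieszIdeal I) {x : E} (hx : x ∈ I) : |x| ∈ I :=
  hI _ x (by rw [abs_abs]) hx

lemma ideal_le {I : Submodule ℝ E} (hI : IsRieszIdeal I) {x y : E} (hy : y ∈ I)
    (h0 : 0 ≤ x) (h : x ≤ y) : x ∈ I :=
  hI x y (by rw [abs_of_nonneg h0]; exact h.trans (le_abs_self y)) hy

lemma ideal_inf {I J : Submodule ℝ E} (hI : IsRieszIdeal I) (hJ : IsRieszIdeal J) :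
    IsRieszIdeal (I ⊓ J) := fun x y h hy => ⟨hI x y h hy.1, hJ x y h hy.2⟩

lemma eq_zero_of_abs_inf {x : E} (h : |x| ⊓ |x| = 0) : x = 0 := by
  rw [inf_idem] at h
  apply le_antisymm
  · exact h ▸ le_abs_self x
  · exact neg_nonpos.1 (h ▸ neg_le_abs x)

lemma dc_band [Nontrivial E] (D : Set E) : IsBand (dc D) := by
  refine ⟨dc_ideal D, ?_⟩
  intro S x hS hx
  have hne : S.Nonempty := by
    rw [Set.nonempty_iff_ne_empty]
    rintro rfl
    obtain ⟨y, hy⟩ := exists_ne (0 : E)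
    have hb : ∀ z, x ≤ z := fun z => hx.2 (by simp [upperBounds])
    have h1 : ∀ z : E, 0 ≤ z := by
      intro z
      have := hb (x + z)
      simpa using this
    exact hy (le_antisymm (neg_nonneg.1 (h1 (-y))) (h1 y))
  obtain ⟨d, hd⟩ := hne
  have hneg : x⁻ ∈ dc D := by
    have h1 : |d| ∈ dc D := ideal_abs (dc_ideal D) (hS hd)
    refine ideal_le (dc_ideal D) h1 (negPart_nonneg x) ?_
    apply sup_le
    · exact (neg_le_neg (hx.1 hd)).trans (neg_le_abs d)
    · exact abs_nonneg d
  have hpos : x⁺ ∈ dc D := by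
    intro y hy
    rw [abs_of_nonneg (posPart_nonneg x)]
    set w := x⁺ ⊓ |y| with hw
    have hw0 : 0 ≤ w := le_inf (posPart_nonneg x) (abs_nonneg y)
    have hub : x - w ∈ upperBounds S := by
      intro e he
      have h1 : e⁺ ⊓ w = 0 := by
        have h2 : |e| ⊓ |y| = 0 := hS he y hy
        apply le_antisymm _ (le_inf (posPart_nonneg e) hw0)
        rw [← h2]
        apply inf_le_inf _ inf_le_right
        exact sup_le (le_abs_self e) (abs_nonneg e)
      have h3 : e⁺ + w = e⁺ ⊔ w := by
        have := inf_add_sup e⁺ w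
        rw [h1, zero_add] at this
        exact this.symm
      have hex : e ≤ x := hx.1 he
      have h4 : e⁺ + w ≤ x⁺ := by
        rw [h3]
        exact sup_le (sup_le_sup_right hex 0) inf_le_left
      have h5 : x⁻ ≤ e⁻ := sup_le_sup_right (neg_le_neg hex) 0
      have h6 : e = e⁺ - e⁻ := (posPart_sub_negPart e).symm
      have h7 : x = x⁺ - x⁻ := (posPart_sub_negPart x).symm
      have h8 : e⁺ ≤ x⁺ - w := le_sub_iff_add_le.2 h4
      calc e = e⁺ - e⁻ := h6
        _ ≤ (x⁺ - w) - x⁻ := sub_le_sub h8 h5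
        _ = (x⁺ - x⁻) - w := by abel
        _ = x - w := by rw [← h7]
    have := hx.2 hub
    have h9 : w ≤ 0 := by simpa using this
    exact le_antisymm h9 hw0
  have h := (dc D).sub_mem hpos hneg
  rwa [posPart_sub_negPart] at h

lemma arch_le (harch : RieszArchimedean E) {x y : E}
    (h : ∀ n : ℕ, 0 < n → n • x ≤ y) : x ≤ 0 := by
  have h1 : x⁺ = 0 := by
    apply harch x⁺ y⁺
    intro n hn
    refine ⟨nsmul_nonneg (posPart_nonneg x) n, ?_⟩
    -- n • x⁺ ≤ (n • x)⁺
    have hd : x⁺ ⊓ x⁻ = 0 := posPart_inf_negPart_eq_zero x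
    have hd2 : (n • x⁺) ⊓ x⁻ = 0 :=
      disj_nsmul (posPart_nonneg x) (negPart_nonneg x) hd n
    have hd3 : (n • x⁻) ⊓ (n • x⁺) = 0 := by
      apply disj_nsmul (negPart_nonneg x) (nsmul_nonneg (posPart_nonneg x) n)
      rw [inf_comm]; exact hd2
    have h3 : n • x⁺ + n • x⁻ = (n • x⁻) ⊔ (n • x⁺) := by
      have := inf_add_sup (n • x⁻) (n • x⁺)
      rw [hd3, zero_add] at this
      rw [this, add_comm]
    have h4 : n • x = n • x⁺ - n • x⁻ := by
      rw [← nsmul_sub, posPart_sub_negPart]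
    have h5 : n • x⁺ = (n • x)⁺ := by
      rw [h4]
      show _ = (n • x⁺ - n • x⁻) ⊔ 0
      have h6 : (n • x⁺ - n • x⁻) ⊔ 0 = (n • x⁺ ⊔ n • x⁻) - n • x⁻ := by
        rw [sup_sub]; simp
      rw [h6, sup_comm, ← h3]; simp
    rw [h5]
    exact sup_le_sup_right (h n hn) 0
  rw [← h1]; exact le_posPart x

lemma max_coef (harch : RieszArchimedean E) {a x : E} (ha : 0 ≤ a) (ha0 : a ≠ 0) (hx : 0 ≤ x) :
    ∃ t : ℝ, 0 ≤ t ∧ t • a ≤ x ∧ ∀ s : ℝ, s • a ≤ x → s ≤ t := by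
  set T : Set ℝ := {t | t • a ≤ x} with hT
  have h0 : (0 : ℝ) ∈ T := by simp [hT, hx]
  have hbd : BddAbove T := by
    by_contra hb
    rw [not_bddAbove_iff] at hb
    apply ha0
    apply le_antisymm _ ha
    apply arch_le harch (y := x)
    intro n _
    obtain ⟨t, ht, hnt⟩ := hb n
    rw [← Nat.cast_smul_eq_nsmul ℝ]
    exact (smul_mono_left hnt.le ha).trans ht
  refine ⟨sSup T, le_csSup hbd h0, ?_, fun s hs => le_csSup hbd hs⟩
  rw [← sub_nonpos]
  apply arch_le harch (y := a)
  intro n hn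
  have hn' : (0 : ℝ) < n := by exact_mod_cast hn
  obtain ⟨t, ht, htt⟩ := exists_lt_of_lt_csSup ⟨0, h0⟩
    (show sSup T - 1 / n < sSup T by have : (0:ℝ) < 1 / n := by positivity
                                     linarith)
  have h1 : sSup T • a - x ≤ (1 / n : ℝ) • a := by
    have h2 : sSup T • a ≤ (t + 1 / n) • a := smul_mono_left (by linarith) ha
    rw [add_smul] at h2
    have h3 : t • a ≤ x := ht
    rw [sub_le_iff_le_add]
    exact h2.trans (by rw [add_comm]; gcongr)
  have h4 := smul_le_smul_of_nonneg_left h1 hn'.le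
  rw [smul_smul, mul_one_div_cancel hn'.ne', one_smul, Nat.cast_smul_eq_nsmul] at h4
  exact h4

/-- The set of atoms. -/
def At (E : Type*) [AddCommGroup E] [Lattice E] [Module ℝ E] : Set E :=
  {a | 0 ≤ a ∧ a ≠ 0 ∧ ∀ y, 0 ≤ y → y ≤ a → ∃ s : ℝ, y = s • a}

lemma exists_atom [FiniteDimensional ℝ E] (harch : RieszArchimedean E) :
    ∀ (n : ℕ) (I : Submodule ℝ E), Module.finrank ℝ I = n → IsRieszIdeal I → I ≠ ⊥ →
      ∃ a ∈ I, a ∈ At E := by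
  intro n
  induction n using Nat.strong_induction_on with
  | _ n ih =>
  intro I hn hI hI0
  by_cases htot : ∀ u ∈ I, u ≤ 0 ∨ 0 ≤ u
  · obtain ⟨b, hb, hb0⟩ := (Submodule.ne_bot_iff I).1 hI0
    refine ⟨|b|, ideal_abs hI hb, abs_nonneg b, ?_, ?_⟩
    · intro h
      exact hb0 (eq_zero_of_abs_inf (by rw [inf_idem, h]))
    have ha : 0 ≤ |b| := abs_nonneg b
    have ha0 : |b| ≠ 0 := fun h => hb0 (eq_zero_of_abs_inf (by rw [inf_idem, h]))
    have haI : |b| ∈ I := ideal_abs hI hb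
    generalize |b| = a at *
    intro y hy hya
    have hyI : y ∈ I := ideal_le hI haI hy hya
    obtain ⟨t, ht0, ht, hmax⟩ := max_coef harch ha ha0 hy
    refine ⟨t, ?_⟩
    apply le_antisymm _ ht
    rw [← sub_nonpos]
    apply arch_le harch (y := a)
    intro n hn
    have hn' : (0 : ℝ) < n := by exact_mod_cast hn
    have h1 : y ≤ (t + 1 / n) • a := by
      rcases htot (y - (t + 1 / n : ℝ) • a) (I.sub_mem hyI (I.smul_mem _ haI)) with h | h
      · exact sub_nonpos.1 h
      · have := hmax _ (sub_nonneg.1 h)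
        have h2 : (0 : ℝ) < 1 / n := by positivity
        linarith
    have h2 : y - t • a ≤ (1 / n : ℝ) • a := by
      rw [sub_le_iff_le_add, ← add_smul, add_comm (1 / (n:ℝ))]; exact h1
    have h4 := smul_le_smul_of_nonneg_left h2 hn'.le
    rw [smul_smul, mul_one_div_cancel hn'.ne', one_smul, Nat.cast_smul_eq_nsmul] at h4
    exact h4
  · push Not at htot
    obtain ⟨u, hu, hu1, hu2⟩ := htot
    have hp : u⁺ ∈ I := ideal_le hI (ideal_abs hI hu) (posPart_nonneg u)
      (sup_le (le_abs_self u) (abs_nonneg u))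
    have hm : u⁻ ∈ I := ideal_le hI (ideal_abs hI hu) (negPart_nonneg u)
      (sup_le (neg_le_abs u) (abs_nonneg u))
    have hlt : I ⊓ dc {u⁺} < I := by
      refine lt_of_le_of_ne inf_le_left ?_
      intro h
      have : u⁺ ∈ I ⊓ dc {u⁺} := h.ge hp
      have h0 : u⁺ = 0 := eq_zero_of_abs_inf (this.2 u⁺ rfl)
      exact hu1 (posPart_eq_zero.1 h0)
    have hne : I ⊓ dc {u⁺} ≠ ⊥ := by
      intro h
      have : u⁻ ∈ I ⊓ dc {u⁺} := by
        refine ⟨hm, ?_⟩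
        rintro _ rfl
        rw [abs_of_nonneg (posPart_nonneg u), abs_of_nonneg (negPart_nonneg u), inf_comm]
        exact posPart_inf_negPart_eq_zero u
      rw [h, Submodule.mem_bot] at this
      exact hu2 (negPart_eq_zero.1 this)
    obtain ⟨a, ha, haA⟩ := ih _ (hn ▸ Submodule.finrank_lt_finrank_of_lt hlt) _ rfl
      (ideal_inf hI (dc_ideal _)) hne
    exact ⟨a, ha.1, haA⟩

lemma atom_proj (harch : RieszArchimedean E) {a x : E} (ha : a ∈ At E) (hx : 0 ≤ x) :
    ∃ t : ℝ, 0 ≤ t ∧ t • a ≤ x ∧ (x - t • a) ⊓ a = 0 := by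
  obtain ⟨ha, ha0, hat⟩ := ha
  obtain ⟨t, ht0, ht, hmax⟩ := max_coef harch ha ha0 hx
  refine ⟨t, ht0, ht, ?_⟩
  have hnn : 0 ≤ (x - t • a) ⊓ a := le_inf (sub_nonneg.2 ht) ha
  obtain ⟨s, hs⟩ := hat _ hnn inf_le_right
  have h1 : s • a ≤ x - t • a := hs ▸ inf_le_left
  have h2 : (s + t) • a ≤ x := by
    rw [add_smul]; exact le_sub_iff_add_le.1 h1
  have h3 : s ≤ 0 := by linarith [hmax _ h2]
  apply le_antisymm _ hnn
  rw [hs]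
  have := smul_mono_left h3 ha
  simpa using this

lemma atoms_span [FiniteDimensional ℝ E] (harch : RieszArchimedean E) :
    ∀ (n : ℕ) (I : Submodule ℝ E), Module.finrank ℝ I = n → IsRieszIdeal I →
      I ≤ Submodule.span ℝ (At E) := by
  intro n
  induction n using Nat.strong_induction_on with
  | _ n ih =>
  intro I hn hI
  by_cases hI0 : I = ⊥
  · rw [hI0]; exact bot_le
  obtain ⟨a, haI, haA⟩ := exists_atom harch _ I rfl hI hI0
  have hlt : I ⊓ dc {a} < I := by
    refine lt_of_le_of_ne inf_le_left ?_
    intro h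
    have : a ∈ I ⊓ dc {a} := h.ge haI
    exact haA.2.1 (eq_zero_of_abs_inf (this.2 a rfl))
  have hle := ih _ (hn ▸ Submodule.finrank_lt_finrank_of_lt hlt) _ rfl
      (ideal_inf hI (dc_ideal _))
  have hpos : ∀ x ∈ I, 0 ≤ x → x ∈ Submodule.span ℝ (At E) := by
    intro x hx hx0
    obtain ⟨t, ht0, ht, hd⟩ := atom_proj harch haA hx0
    have h1 : x - t • a ∈ I ⊓ dc {a} := by
      refine ⟨I.sub_mem hx (I.smul_mem _ haI), ?_⟩
      rintro _ rfl
      rw [abs_of_nonneg (sub_nonneg.2 ht), abs_of_nonneg haA.1]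
      exact hd
    have h2 := Submodule.add_mem _ (hle h1)
      (Submodule.smul_mem _ t (Submodule.subset_span haA))
    simpa using h2
  intro u hu
  have hp : u⁺ ∈ I := ideal_le hI (ideal_abs hI hu) (posPart_nonneg u)
      (sup_le (le_abs_self u) (abs_nonneg u))
  have hm : u⁻ ∈ I := ideal_le hI (ideal_abs hI hu) (negPart_nonneg u)
      (sup_le (neg_le_abs u) (abs_nonneg u))
  rw [← posPart_sub_negPart u]
  exact Submodule.sub_mem _ (hpos _ hp (posPart_nonneg u)) (hpos _ hm (negPart_nonneg u))

lemma sup_dc [FiniteDimensional ℝ E] (harch : RieszArchimedean E)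
    {I : Submodule ℝ E} (hI : IsRieszIdeal I) : I ⊔ dc (I : Set E) = ⊤ := by
  rw [eq_top_iff]
  refine (atoms_span harch _ ⊤ rfl (fun _ _ _ _ => trivial)).trans ?_
  rw [Submodule.span_le]
  intro a ha
  by_cases h : ∀ b ∈ I, |a| ⊓ |b| = 0
  · exact Submodule.mem_sup_right (show a ∈ dc (I : Set E) from h)
  · push Not at h
    obtain ⟨b, hb, hab⟩ := h
    rw [abs_of_nonneg ha.1] at hab
    have hnn : 0 ≤ a ⊓ |b| := le_inf ha.1 (abs_nonneg b)
    obtain ⟨s, hs⟩ := ha.2.2 _ hnn inf_le_left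
    have hmem : s • a ∈ I := hs ▸ ideal_le hI (ideal_abs hI hb) hnn inf_le_right
    have hs0 : s ≠ 0 := by
      rintro rfl
      exact hab (by rw [hs, zero_smul])
    apply Submodule.mem_sup_left
    have := I.smul_mem s⁻¹ hmem
    rwa [smul_smul, inv_mul_cancel₀ hs0, one_smul] at this

lemma inf_dc (I : Submodule ℝ E) {x : E} (h : x ∈ I) (h2 : x ∈ dc (I : Set E)) : x = 0 :=
  eq_zero_of_abs_inf (h2 x h)

lemma ideal_band [Nontrivial E] [FiniteDimensional ℝ E] (harch : RieszArchimedean E)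
    {I : Submodule ℝ E} (hI : IsRieszIdeal I) : IsBand I := by
  have : I = dc (dc (I : Set E) : Set E) := by
    apply le_antisymm
    · intro x hx y hy
      rw [inf_comm]; exact hy x hx
    · intro x hx
      obtain ⟨b, hb, c, hc, hbc⟩ := Submodule.mem_sup.1
        (show x ∈ I ⊔ dc (I : Set E) by rw [sup_dc harch hI]; trivial)
      have h1 : b ∈ dc (dc (I : Set E) : Set E) := by
        intro y hy
        rw [inf_comm]; exact hy b hb
      have h2 : c ∈ dc (dc (I : Set E) : Set E) := by
        have := Submodule.sub_mem _ hx h1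
        rwa [← hbc, add_sub_cancel_left] at this
      have h3 := inf_dc _ hc h2
      rw [← hbc, h3, add_zero]; exact hb
  rw [this]
  exact dc_band _

variable {G : Type*} [Group G]

lemma inv_inf {ρ : G →* (E ≃ₗ[ℝ] E)} {B C : Submodule ℝ E}
    (hB : InvariantSubmodule ρ B) (hC : InvariantSubmodule ρ C) :
    InvariantSubmodule ρ (B ⊓ C) := fun s x hx => ⟨hB s x hx.1, hC s x hx.2⟩

lemma inv_dc {ρ : G →* (E ≃ₗ[ℝ] E)} (hρ : IsPositiveRep ρ) {B : Submodule ℝ E}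
    (hB : InvariantSubmodule ρ B) : InvariantSubmodule ρ (dc (B : Set E)) := by
  intro s x hx y hy
  let φ : E ≃o E := { toEquiv := (ρ s).toEquiv, map_rel_iff' := (hρ s _ _).symm }
  have hφ : ∀ z, φ z = ρ s z := fun _ => rfl
  have habs : ∀ z, |ρ s z| = ρ s |z| := by
    intro z
    show ρ s z ⊔ - ρ s z = ρ s (z ⊔ -z)
    rw [← map_neg, ← hφ, ← hφ, ← hφ, map_sup]
  have hz := hB s⁻¹ y hy
  have hyz : y = ρ s (ρ s⁻¹ y) := by
    rw [← LinearEquiv.mul_apply, ← map_mul]; simp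
  rw [hyz, habs, habs, ← hφ, ← hφ, ← map_inf, hx _ hz, hφ, map_zero]

lemma exists_irr [Nontrivial E] [FiniteDimensional ℝ E]
    (ρ : G →* (E ≃ₗ[ℝ] E)) :
    ∀ (n : ℕ) (C : Submodule ℝ E), Module.finrank ℝ C = n → IsBand C →
      InvariantSubmodule ρ C → C ≠ ⊥ → ∃ B, IsIrreducibleInvariantBand ρ B ∧ B ≤ C := by
  intro n
  induction n using Nat.strong_induction_on with
  | _ n ih =>
  intro C hn hC hCi hC0
  by_cases h : ∀ D : Submodule ℝ E, IsBand D → InvariantSubmodule ρ D → D ≤ C → D = ⊥ ∨ D = C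
  · exact ⟨C, ⟨hC, hCi, hC0, h⟩, le_rfl⟩
  · push Not at h
    obtain ⟨D, hD, hDi, hDC, hD0, hDne⟩ := h
    obtain ⟨B, hB, hBD⟩ := ih _
      (hn ▸ Submodule.finrank_lt_finrank_of_lt (lt_of_le_of_ne hDC hDne)) D rfl hD hDi hD0
    exact ⟨B, hB, hBD.trans hDC⟩

lemma band_sSup [Nontrivial E] [FiniteDimensional ℝ E] (harch : RieszArchimedean E)
    {ρ : G →* (E ≃ₗ[ℝ] E)} (hρ : IsPositiveRep ρ) :
    ∀ (n : ℕ) (C : Submodule ℝ E), Module.finrank ℝ C = n → IsBand C →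
      InvariantSubmodule ρ C →
      C ≤ sSup {B : Submodule ℝ E | IsIrreducibleInvariantBand ρ B ∧ B ≤ C} := by
  intro n
  induction n using Nat.strong_induction_on with
  | _ n ih =>
  intro C hn hC hCi
  by_cases hC0 : C = ⊥
  · rw [hC0]; exact bot_le
  obtain ⟨B, hB, hBC⟩ := exists_irr ρ _ C rfl hC hCi hC0
  have hlt : C ⊓ dc (B : Set E) < C := by
    refine lt_of_le_of_ne inf_le_left ?_
    intro h
    obtain ⟨b, hb, hb0⟩ := (Submodule.ne_bot_iff B).1 hB.2.2.1
    have h1 : b ∈ C ⊓ dc (B : Set E) := h.ge (hBC hb)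
    exact hb0 (inf_dc B hb h1.2)
  have hle := ih _ (hn ▸ Submodule.finrank_lt_finrank_of_lt hlt) _ rfl
    (ideal_band harch (ideal_inf hC.1 (dc_ideal _))) (inv_inf hCi (inv_dc hρ hB.2.1))
  have hle2 := hle.trans (sSup_le_sSup
    (fun D hD => (⟨hD.1, hD.2.trans inf_le_left⟩ :
      D ∈ {B : Submodule ℝ E | IsIrreducibleInvariantBand ρ B ∧ B ≤ C})))
  have hB2 : B ≤ sSup {B : Submodule ℝ E | IsIrreducibleInvariantBand ρ B ∧ B ≤ C} :=
    le_sSup ⟨hB, hBC⟩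
  intro x hx
  obtain ⟨b, hb, c, hc, hbc⟩ := Submodule.mem_sup.1
    (show x ∈ B ⊔ dc (B : Set E) by rw [sup_dc harch hB.1.1]; trivial)
  have hcC : c ∈ C := by
    have := C.sub_mem hx (hBC hb)
    rwa [← hbc, add_sub_cancel_left] at this
  rw [← hbc]
  exact Submodule.add_mem _ (hB2 hb) (hle2 ⟨hcC, hc⟩)

lemma irr_disj [Nontrivial E] {ρ : G →* (E ≃ₗ[ℝ] E)} {B C : Submodule ℝ E}
    (hband : ∀ I : Submodule ℝ E, IsRieszIdeal I → IsBand I)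
    (hB : IsIrreducibleInvariantBand ρ B) (hC : IsIrreducibleInvariantBand ρ C) (hne : B ≠ C)
    {b c : E} (hb : b ∈ B) (hc : c ∈ C) : |b| ⊓ |c| = 0 := by
  have hi := hband _ (ideal_inf hB.1.1 hC.1.1)
  have hinv := inv_inf hB.2.1 hC.2.1
  have hbot : B ⊓ C = ⊥ := by
    rcases hB.2.2.2 _ hi hinv inf_le_left with h | h
    · exact h
    · rcases hC.2.2.2 _ hi hinv inf_le_right with h' | h'
      · exact h'
      · exact absurd (h.symm.trans h') hne
  have hnn : 0 ≤ |b| ⊓ |c| := le_inf (abs_nonneg b) (abs_nonneg c)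
  have : |b| ⊓ |c| ∈ B ⊓ C :=
    ⟨ideal_le hB.1.1 (ideal_abs hB.1.1 hb) hnn inf_le_left,
     ideal_le hC.1.1 (ideal_abs hC.1.1 hc) hnn inf_le_right⟩
  rw [hbot] at this
  exact this

lemma nonneg_of_disj {b c : E} (h : 0 ≤ b + c) (hd : |c| ⊓ |b| = 0) : 0 ≤ b := by
  have h1 : b⁻ ≤ |c| := by
    apply sup_le _ (abs_nonneg c)
    exact (neg_le_iff_add_nonneg'.2 h).trans (le_abs_self c)
  have h2 : b⁻ ≤ |b| := sup_le (neg_le_abs b) (abs_nonneg b)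
  have h3 : b⁻ ≤ 0 := hd ▸ le_inf h1 h2
  exact negPart_eq_zero.1 (le_antisymm h3 (negPart_nonneg b))

end

end RieszAux

/-- For a positive representation of a finite group in a nonzero finite dimensional
Archimedean Riesz space, the space is the order direct sum of the irreducible invariant
bands, and every invariant band is the direct sum of the irreducible invariant bands it
contains. -/
theorem stmt15 {G E : Type*} [Group G] [Finite G] [AddCommGroup E] [Lattice E]
    [Module ℝ E] [Nontrivial E] [FiniteDimensional ℝ E]
    (hadd : ∀ x y z : E, x ≤ y → x + z ≤ y + z)
    (hsmul : ∀ (c : ℝ) (x : E), 0 ≤ c → 0 ≤ x → 0 ≤ c • x)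
    (harch : RieszArchimedean E)
    (ρ : G →* (E ≃ₗ[ℝ] E)) (hρ : IsPositiveRep ρ) :
    IsInternalOrderDirectSum
      (fun B : {B : Submodule ℝ E // IsIrreducibleInvariantBand ρ B} => B.1) ∧
    ∀ C : Submodule ℝ E, IsBand C → InvariantSubmodule ρ C →
      C = sSup {B : Submodule ℝ E | IsIrreducibleInvariantBand ρ B ∧ B ≤ C} := by
  have hE : IsOrderedAddMonoid E := ⟨fun a b h c => hadd a b c h, fun a b h c => by
    rw [add_comm c a, add_comm c b]; exact hadd a b c h⟩
  have hS : PosSMulMono ℝ E := ⟨fun c hc x y hxy => by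
    have h1 : 0 ≤ y - x := sub_nonneg.2 hxy
    have h2 := hsmul c _ hc h1
    rw [smul_sub] at h2
    exact sub_nonneg.1 h2⟩
  have hpos : ∀ f : {B : Submodule ℝ E // IsIrreducibleInvariantBand ρ B} →₀ E,
      (∀ i, f i ∈ i.1) → (0 ≤ f.sum (fun _ v => v) ↔ ∀ i, 0 ≤ f i) := by
    intro f hf
    constructor
    · intro h i
      by_cases hi : i ∈ f.support
      · classical
        rw [Finsupp.sum, ← Finset.add_sum_erase _ _ hi] at h
        refine RieszAux.nonneg_of_disj h ?_
        have : (∑ j ∈ f.support.erase i, f j) ∈ RieszAux.dc (i.1 : Set E) := by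
          refine Submodule.sum_mem _ ?_
          intro j hj y hy
          refine RieszAux.irr_disj (fun I hI => RieszAux.ideal_band harch hI) j.2 i.2 ?_ (hf j) hy
          intro hji
          exact (Finset.mem_erase.1 hj).1 (Subtype.ext hji)
        exact this _ (hf i)
      · rw [Finsupp.notMem_support_iff.1 hi]
    · intro h
      exact Finset.sum_nonneg (fun i _ => h i)
  have htop : IsBand (⊤ : Submodule ℝ E) := ⟨fun _ _ _ _ => trivial, fun _ _ _ _ => trivial⟩
  refine ⟨⟨?_, ?_, hpos⟩, ?_⟩
  · intro x
    have hx : x ∈ (⨆ B : {B : Submodule ℝ E // IsIrreducibleInvariantBand ρ B}, B.1) := by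
      have h1 := RieszAux.band_sSup harch hρ _ ⊤ rfl htop (fun _ _ _ => trivial)
        (show x ∈ ⊤ from trivial)
      revert h1
      apply SetLike.le_def.1
      apply sSup_le
      intro B hB
      exact le_iSup (fun B : {B : Submodule ℝ E // IsIrreducibleInvariantBand ρ B} => B.1)
        ⟨B, hB.1⟩
    exact (Submodule.mem_iSup_iff_exists_finsupp _ _).1 hx
  · intro f hf h0
    have h1 := (hpos f hf).1 h0.ge
    ext i
    by_cases hi : i ∈ f.support
    · exact (Finset.sum_eq_zero_iff_of_nonneg (fun j _ => h1 j)).1 h0 i hi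
    · exact Finsupp.notMem_support_iff.1 hi
  · intro C hC hCi
    exact le_antisymm (RieszAux.band_sSup harch hρ _ C rfl hC hCi)
      (sSup_le fun B hB => hB.2)
end

section
/- Let G be a finite group. For a subgroup H of G, let π^H : G → Aut⁺(C(G/H)) be the positive representation defined by π^H_s e_{tH} = e_{stH}. Then: (a) each π^H is band irreducible; (b) if subgroups H₁ and H₂ of G are conjugate, then π^{H₁} and π^{H₂} are order equivalent; (c) conversely, if π^{H₁} and π^{H₂} are order equivalent, then H₁ and H₂ are conjugate; and (d) every band irreducible positive representation of G in a nonzero finite dimensional Archimedean Riesz space is order equivalent to π^H for some subgroup H of G. -/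
/-- `ρ` is band irreducible if the only `ρ`-invariant bands are `{0}` and `E`. -/
def BandIrreducible {E : Type*} [AddCommGroup E] [Lattice E] [Module ℝ E]
    {G : Type*} [Group G] (ρ : G →* (E ≃ₗ[ℝ] E)) : Prop :=
  ∀ B : Submodule ℝ E, IsBand B → InvariantSubmodule ρ B → B = ⊥ ∨ B = ⊤

/-- The lattice automorphism of `C(G/H) = (G ⧸ H → ℝ)` given by left translation
by `s`; it maps the basis vector `e_{tH}` to `e_{stH}`. -/
noncomputable def cosetShift {G : Type*} [Group G] (H : Subgroup G) (s : G) :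
    (G ⧸ H → ℝ) ≃ₗ[ℝ] (G ⧸ H → ℝ) where
  toFun f := fun c => f (s⁻¹ • c)
  invFun f := fun c => f (s • c)
  map_add' _ _ := rfl
  map_smul' _ _ := rfl
  left_inv f := funext fun c => by simp [smul_smul]
  right_inv f := funext fun c => by simp [smul_smul]

/-- The canonical positive representation `π^H` of `G` on `C(G/H)`, with
`π^H_s e_{tH} = e_{stH}`. -/
noncomputable def cosetRep (G : Type*) [Group G] (H : Subgroup G) :
    G →* ((G ⧸ H → ℝ) ≃ₗ[ℝ] (G ⧸ H → ℝ)) where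
  toFun s := cosetShift H s
  map_one' := by
    apply LinearEquiv.toLinearMap_injective
    ext f c
    simp [cosetShift]
  map_mul' s t := by
    apply LinearEquiv.toLinearMap_injective
    ext f c
    simp [cosetShift, mul_smul]

section RieszAux

set_option linter.unusedSectionVars false

variable {E : Type*} [AddCommGroup E] [Lattice E] [Module ℝ E]
  [IsOrderedAddMonoid E] [IsOrderedModule ℝ E]

theorem aux_dis_add {x y a : E} (hx : 0 ≤ x) (hy : 0 ≤ y) (ha : 0 ≤ a)
    (h1 : x ⊓ a = 0) (h2 : y ⊓ a = 0) : (x + y) ⊓ a = 0 := by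
  apply le_antisymm _ (le_inf (add_nonneg hx hy) ha)
  have hw1 : (x + y) ⊓ a ≤ x + y := inf_le_left
  have hw2 : (x + y) ⊓ a ≤ a := inf_le_right
  generalize (x + y) ⊓ a = w at *
  have h3 : w - x ≤ y ⊓ a :=
    le_inf (by rw [sub_le_iff_le_add']; exact hw1) ((sub_le_self w hx).trans hw2)
  rw [h2, sub_nonpos] at h3
  rw [← h1]
  exact le_inf h3 hw2

theorem aux_dis_mono {x y a : E} (hx : 0 ≤ x) (ha : 0 ≤ a) (hxy : x ≤ y) (h : y ⊓ a = 0) :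
    x ⊓ a = 0 :=
  le_antisymm (h ▸ inf_le_inf_right a hxy) (le_inf hx ha)

theorem aux_dis_nsmul {x a : E} (hx : 0 ≤ x) (ha : 0 ≤ a) (h : x ⊓ a = 0) (n : ℕ) :
    (n • x) ⊓ a = 0 := by
  induction n with
  | zero => simpa using ha
  | succ n ih => rw [succ_nsmul]; exact aux_dis_add (nsmul_nonneg hx n) hx ha ih h

theorem aux_dis_smul {x a : E} (hx : 0 ≤ x) (ha : 0 ≤ a) (h : x ⊓ a = 0) {c : ℝ} (hc : 0 ≤ c) :
    (c • x) ⊓ a = 0 := by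
  obtain ⟨n, hn⟩ := exists_nat_ge c
  apply aux_dis_mono (smul_nonneg hc hx) ha _ (aux_dis_nsmul hx ha h n)
  rw [← Nat.cast_smul_eq_nsmul ℝ]
  exact smul_le_smul_of_nonneg_right hn hx

theorem aux_abs_eq_zero {x : E} (h : |x| ≤ 0) : x = 0 :=
  le_antisymm ((le_abs_self x).trans h) (by simpa using (neg_le_abs x).trans h)

theorem aux_abs_smul_le (c : ℝ) (x : E) : |c • x| ≤ |c| • |x| := by
  have hx := le_abs_self x
  have hx' := neg_le_abs x
  have key : ∀ d : ℝ, ∀ z : E, z ≤ |x| → -z ≤ |x| → d • z ≤ |d| • |x| := by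
    intro d z h1 h2
    rcases le_total 0 d with hd | hd
    · rw [abs_of_nonneg hd]; exact smul_le_smul_of_nonneg_left h1 hd
    · rw [abs_of_nonpos hd]
      have := smul_le_smul_of_nonneg_left h2 (neg_nonneg.2 hd)
      simpa using this
  apply abs_le'.2 ⟨key c x hx hx', ?_⟩
  have := key c (-x) hx' (by simpa using hx)
  simpa using this

theorem aux_arch (hA : RieszArchimedean E) {x y : E} (hx : 0 ≤ x)
    (h : ∀ t : ℝ, 0 < t → x ≤ t • y) : x = 0 := by
  apply hA x y
  intro n hn
  refine ⟨nsmul_nonneg hx n, ?_⟩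
  have hn' : (0 : ℝ) < n := by exact_mod_cast hn
  have := smul_le_smul_of_nonneg_left (h (n : ℝ)⁻¹ (by positivity)) hn'.le
  rw [smul_smul, mul_inv_cancel₀ hn'.ne', one_smul, Nat.cast_smul_eq_nsmul] at this
  exact this

theorem aux_coef (hA : RieszArchimedean E) {a u : E} (ha : 0 < a) (hu : 0 ≤ u) :
    ∃ l : ℝ, 0 ≤ l ∧ l • a ≤ u ∧ ∀ t : ℝ, t • a ≤ u - l • a → t ≤ 0 := by
  set S : Set ℝ := {t | t • a ≤ u} with hS
  have h0 : (0 : ℝ) ∈ S := by simpa [hS] using hu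
  have hb : BddAbove S := by
    by_contra hb
    apply ha.ne'
    apply hA a u
    intro n hn
    refine ⟨nsmul_nonneg ha.le n, ?_⟩
    rw [not_bddAbove_iff] at hb
    obtain ⟨t, ht, hnt⟩ := hb n
    rw [← Nat.cast_smul_eq_nsmul ℝ]
    exact (smul_le_smul_of_nonneg_right hnt.le ha.le).trans ht
  refine ⟨sSup S, le_csSup hb h0, ?_, ?_⟩
  · have : (sSup S • a - u)⁺ = 0 := by
      apply aux_arch hA (y := a) (posPart_nonneg _)
      intro t ht
      apply sup_le _ (smul_nonneg ht.le ha.le)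
      obtain ⟨r, hr, hlt⟩ := exists_lt_of_lt_csSup ⟨0, h0⟩ (sub_lt_self (sSup S) ht)
      have hr' : r • a ≤ u := hr
      rw [sub_le_iff_le_add]
      calc sSup S • a ≤ (t + r) • a := smul_le_smul_of_nonneg_right (by linarith) ha.le
        _ = t • a + r • a := add_smul _ _ _
        _ ≤ _ := by gcongr
    rw [posPart_eq_zero, sub_nonpos] at this
    exact this
  · intro t ht
    have : t + sSup S ∈ S := by
      change (t + sSup S) • a ≤ u
      rw [add_smul]; exact le_sub_iff_add_le.1 ht
    have := le_csSup hb this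
    linarith

/-- atoms -/
def AuxAtom (a : E) : Prop := 0 < a ∧ ∀ x, 0 ≤ x → x ≤ a → ∃ t : ℝ, x = t • a

/-- principal ideal -/
def auxPrincipal (b : E) : Submodule ℝ E where
  carrier := {x | ∃ r : ℝ, |x| ≤ r • b}
  zero_mem' := ⟨0, by simp⟩
  add_mem' := by
    rintro x y ⟨r, hr⟩ ⟨s, hs⟩
    exact ⟨r + s, (abs_add_le x y).trans (by rw [add_smul]; exact add_le_add hr hs)⟩
  smul_mem' := by
    rintro c x ⟨r, hr⟩
    refine ⟨|c| * r, (aux_abs_smul_le c x).trans ?_⟩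
    rw [mul_smul]
    exact smul_le_smul_of_nonneg_left hr (abs_nonneg c)

theorem aux_exists_atom [Nontrivial E] [FiniteDimensional ℝ E] (hA : RieszArchimedean E) :
    ∃ a : E, AuxAtom a := by
  obtain ⟨I, ⟨hI, hne⟩, hmin⟩ := (wellFounded_lt (α := Submodule ℝ E)).has_min
    {I | IsRieszIdeal I ∧ I ≠ ⊥} ⟨⊤, fun _ _ _ _ => trivial, top_ne_bot⟩
  obtain ⟨x, hx, hx0⟩ := I.ne_bot_iff.1 hne
  have habs : |x| ∈ I := hI |x| x (by simp) hx
  have hpr : ∀ b ∈ I, 0 < b → ∀ y ∈ I, ∃ r : ℝ, |y| ≤ r • b := by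
    intro b hb hb0 y hy
    have hle : auxPrincipal b ≤ I := by
      rintro z ⟨r, hr⟩
      exact hI z (r • b) (hr.trans (le_abs_self _)) (I.smul_mem _ hb)
    have : ¬ auxPrincipal b < I := by
      apply hmin
      refine ⟨fun z w hzw ⟨r, hr⟩ => ⟨r, hzw.trans hr⟩, ?_⟩
      rw [Submodule.ne_bot_iff]
      exact ⟨b, ⟨1, by rw [one_smul, abs_of_nonneg hb0.le]⟩, hb0.ne'⟩
    have h3 : auxPrincipal b = I := by
      by_contra h
      exact this (lt_of_le_of_ne hle h)
    rw [← h3] at hy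
    exact hy
  have htot : ∀ y ∈ I, 0 ≤ y ∨ y ≤ 0 := by
    intro y hy
    by_cases h : y⁺ = 0
    · right; exact posPart_eq_zero.1 h
    · left
      have hp : 0 ≤ y⁺ := posPart_nonneg y
      have hq : 0 ≤ y⁻ := negPart_nonneg y
      have hsum := posPart_add_negPart y
      have hpI : y⁺ ∈ I := hI _ y (by rw [abs_of_nonneg hp, ← hsum]; exact le_add_of_nonneg_right hq) hy
      have hqI : y⁻ ∈ I := hI _ y (by rw [abs_of_nonneg hq, ← hsum]; exact le_add_of_nonneg_left hp) hy
      obtain ⟨r, hr⟩ := hpr _ hpI (lt_of_le_of_ne hp (Ne.symm h)) _ hqI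
      rw [abs_of_nonneg hq] at hr
      have hr' : y⁻ ≤ |r| • y⁺ := hr.trans (smul_le_smul_of_nonneg_right (le_abs_self r) hp)
      have := aux_dis_mono hq hq hr'
        (aux_dis_smul hp hq (posPart_inf_negPart_eq_zero y) (abs_nonneg r))
      rw [inf_idem] at this
      exact negPart_eq_zero.1 this
  have ha0 : 0 < |x| := lt_of_le_of_ne (abs_nonneg x) fun h => hx0 (aux_abs_eq_zero h.ge)
  refine ⟨|x|, ha0, ?_⟩
  intro y hy0 hya
  have hyI : y ∈ I := hI y |x| (by rw [abs_of_nonneg hy0, abs_abs]; exact hya) habs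
  obtain ⟨l, hl0, hl, ht⟩ := aux_coef hA ha0 hy0
  refine ⟨l, ?_⟩
  rw [← sub_eq_zero]
  apply aux_arch hA (y := |x|) (sub_nonneg.2 hl)
  intro t ht0
  have hmem : (y - l • |x|) - t • |x| ∈ I :=
    I.sub_mem (I.sub_mem hyI (I.smul_mem _ habs)) (I.smul_mem _ habs)
  rcases htot _ hmem with h | h
  · exact absurd (ht t (sub_nonneg.1 h)) (not_le.2 ht0)
  · exact sub_nonpos.1 h

/-- the vectors disjoint from a given positive family form a submodule -/
def auxDisj {ι : Type*} (A : ι → E) (hA : ∀ i, 0 ≤ A i) : Submodule ℝ E where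
  carrier := {x | ∀ i, |x| ⊓ A i = 0}
  zero_mem' := fun i => by simpa using hA i
  add_mem' := by
    intro x y hx hy i
    exact aux_dis_mono (abs_nonneg _) (hA i) (abs_add_le x y)
      (aux_dis_add (abs_nonneg _) (abs_nonneg _) (hA i) (hx i) (hy i))
  smul_mem' := by
    intro c x hx i
    exact aux_dis_mono (abs_nonneg _) (hA i) (aux_abs_smul_le c x)
      (aux_dis_smul (abs_nonneg _) (hA i) (hx i) (abs_nonneg c))

theorem aux_disj_band {ι : Type*} (A : ι → E) (hA : ∀ i, 0 ≤ A i) : IsBand (auxDisj A hA) := by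
  refine ⟨fun x y hxy hy i => aux_dis_mono (abs_nonneg _) (hA i) hxy (hy i), ?_⟩
  intro D x hD hx
  rcases D.eq_empty_or_nonempty with rfl | ⟨d, hd⟩
  · have hmin : ∀ z, x ≤ z := fun z => hx.2 (by simp [upperBounds])
    have h0 : x = 0 := by
      apply le_antisymm (hmin 0)
      have := hmin (x + x)
      simpa using this
    rw [h0]; exact Submodule.zero_mem _
  intro i
  rw [← posPart_add_negPart]
  have hpos : x⁺ ⊓ A i = 0 := by
    have hw0 : 0 ≤ x⁺ ⊓ A i := le_inf (posPart_nonneg x) (hA i)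
    apply le_antisymm _ hw0
    have hub : x⁺ ≤ x⁺ - x⁺ ⊓ A i := by
      have hmain : ∀ d' ∈ D, d'⁺ ≤ x⁺ - x⁺ ⊓ A i := by
        intro d' hd'
        have h1 : d'⁺ ⊓ A i = 0 := by
          apply aux_dis_mono (posPart_nonneg _) (hA i) _ (hD hd' i)
          rw [← posPart_add_negPart]; exact le_add_of_nonneg_right (negPart_nonneg _)
        have h2 : (x⁺ ⊓ A i) ⊓ d'⁺ = 0 :=
          aux_dis_mono hw0 (posPart_nonneg _) inf_le_right (by rw [inf_comm]; exact h1)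
        rw [le_sub_iff_add_le, add_comm, ← inf_add_sup, h2, zero_add]
        exact sup_le inf_le_left (posPart_mono (hx.1 hd'))
      apply sup_le
      · exact hx.2 fun d' hd' => (le_posPart d').trans (hmain d' hd')
      · exact (posPart_nonneg d).trans (hmain d hd)
    simpa using hub
  have hneg : x⁻ ⊓ A i = 0 := by
    have h1 : x⁻ ≤ |d| := by
      refine (negPart_anti (hx.1 hd)).trans ?_
      rw [← posPart_add_negPart]; exact le_add_of_nonneg_left (posPart_nonneg _)
    exact aux_dis_mono (negPart_nonneg _) (hA i) h1 (hD hd i)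
  exact aux_dis_add (posPart_nonneg _) (negPart_nonneg _) (hA i) hpos hneg

theorem aux_dis_sum {ι : Type*} (A : ι → E) (hA : ∀ i, 0 ≤ A i) (f : ι → ℝ) (hf : ∀ i, 0 ≤ f i)
    {b : E} (hb : 0 ≤ b) (s : Finset ι) (h : ∀ i ∈ s, A i ⊓ b = 0) :
    (∑ i ∈ s, f i • A i) ⊓ b = 0 := by
  classical
  induction s using Finset.induction_on with
  | empty => simpa using hb
  | insert i s hi ih =>
    rw [Finset.sum_insert hi]
    exact aux_dis_add (smul_nonneg (hf i) (hA i))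
      (Finset.sum_nonneg fun j _ => smul_nonneg (hf j) (hA j)) hb
      (aux_dis_smul (hA i) hb (h i (by simp)) (hf i)) (ih fun j hj => h j (by simp [hj]))

theorem aux_sum_le {ι : Type*} (A : ι → E) (hA : ∀ i, 0 ≤ A i)
    (hd : ∀ i j, i ≠ j → A i ⊓ A j = 0) (f : ι → ℝ) (hf : ∀ i, 0 ≤ f i)
    {u : E} (hu : 0 ≤ u) (h : ∀ i, f i • A i ≤ u) (s : Finset ι) :
    ∑ i ∈ s, f i • A i ≤ u := by
  classical
  induction s using Finset.induction_on with
  | empty => simpa using hu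
  | insert i s hi ih =>
    rw [Finset.sum_insert hi, ← inf_add_sup]
    have : f i • A i ⊓ ∑ j ∈ s, f j • A j = 0 := by
      apply aux_dis_smul (hA i) (Finset.sum_nonneg fun j _ => smul_nonneg (hf j) (hA j)) _ (hf i)
      rw [inf_comm]
      apply aux_dis_sum A hA f hf (hA i)
      intro j hj
      exact hd j i (by rintro rfl; exact hi hj)
    rw [this, zero_add]
    exact sup_le (h i) ih

theorem aux_sum_nonneg {ι : Type*} [Fintype ι] (A : ι → E) (hA : ∀ i, 0 < A i)
    (hd : ∀ i j, i ≠ j → A i ⊓ A j = 0) (f : ι → ℝ) (h : 0 ≤ ∑ i, f i • A i) (i : ι) : 0 ≤ f i := by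
  classical
  by_contra hi
  push Not at hi
  rw [← Finset.add_sum_erase _ _ (Finset.mem_univ i)] at h
  have h1 : (-f i) • A i ≤ ∑ j ∈ Finset.univ.erase i, |f j| • A j := by
    rw [neg_smul, neg_le_iff_add_nonneg']
    refine h.trans ?_
    gcongr with j hj
    · exact (hA j).le
    · exact le_abs_self _
  have h2 := aux_dis_sum A (fun j => (hA j).le) (fun j => |f j|) (fun j => abs_nonneg _) (hA i).le
    (Finset.univ.erase i) (fun j hj => hd j i (Finset.ne_of_mem_erase hj))
  have h3 := aux_dis_mono (smul_nonneg (by linarith) (hA i).le) (hA i).le h1 h2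
  rw [inf_comm] at h3
  have h4 := aux_dis_smul (hA i).le (smul_nonneg (by linarith) (hA i).le) h3 (neg_nonneg.2 hi.le)
  rw [inf_idem] at h4
  rcases smul_eq_zero.1 h4 with h5 | h5
  · linarith
  · exact (hA i).ne' h5

theorem aux_span {ι : Type*} [Fintype ι] (hE : RieszArchimedean E) (A : ι → E)
    (hA : ∀ i, AuxAtom (A i)) (hd : ∀ i j, i ≠ j → A i ⊓ A j = 0)
    (hbot : auxDisj A (fun i => (hA i).1.le) = ⊥) {u : E} (hu : 0 ≤ u) :
    ∃ f : ι → ℝ, u = ∑ i, f i • A i := by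
  choose l hl0 hl ht using fun i => aux_coef hE (hA i).1 hu
  refine ⟨l, ?_⟩
  have hA0 : ∀ i, 0 ≤ A i := fun i => (hA i).1.le
  have hle := aux_sum_le A hA0 hd l hl0 hu hl Finset.univ
  have hmem : u - ∑ i, l i • A i ∈ auxDisj A hA0 := by
    intro i
    rw [abs_of_nonneg (sub_nonneg.2 hle)]
    have hw : 0 ≤ (u - ∑ i, l i • A i) ⊓ A i := le_inf (sub_nonneg.2 hle) (hA0 i)
    apply le_antisymm _ hw
    obtain ⟨t, htt⟩ := (hA i).2 _ hw inf_le_right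
    have h1 : t • A i ≤ u - l i • A i := by
      rw [← htt]
      refine inf_le_left.trans (sub_le_sub_left ?_ u)
      exact Finset.single_le_sum (f := fun j => l j • A j)
        (fun j _ => smul_nonneg (hl0 j) (hA0 j)) (Finset.mem_univ i)
    rw [htt]
    exact smul_nonpos_of_nonpos_of_nonneg (ht i t h1) (hA0 i)
  rw [hbot, Submodule.mem_bot, sub_eq_zero] at hmem
  exact hmem

end RieszAux

theorem aux_cosetRep_apply {G : Type*} [Group G] (H : Subgroup G) (s : G) (f : G ⧸ H → ℝ)
    (c : G ⧸ H) : cosetRep G H s f c = f (s⁻¹ • c) := rfl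

open Classical in
theorem aux_cosetRep_single {G : Type*} [Group G] (H : Subgroup G) (s : G) (r : ℝ)
    (c : G ⧸ H) : cosetRep G H s (Pi.single c r) = Pi.single (s • c) r := by
  funext d
  rw [aux_cosetRep_apply]
  simp only [Pi.single_apply, inv_smul_eq_iff]

theorem aux_part_a {G : Type*} [Group G] [Finite G] (H : Subgroup G) :
    BandIrreducible (cosetRep G H) := by
  classical
  haveI := Fintype.ofFinite (G ⧸ H)
  intro B hB hinv
  by_cases hne : B = ⊥
  · exact Or.inl hne
  right
  obtain ⟨f, hf, hf0⟩ := B.ne_bot_iff.1 hne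
  obtain ⟨c, hc⟩ := Function.ne_iff.1 hf0
  have hc' : f c ≠ 0 := hc
  have h1 : (Pi.single c 1 : G ⧸ H → ℝ) ∈ B := by
    apply hB.1 _ ((f c)⁻¹ • f) _ (B.smul_mem _ hf)
    intro d
    by_cases hd : d = c
    · subst hd; simp [hc']
    · simp [hd]; positivity
  have h2 : ∀ d, (Pi.single d 1 : G ⧸ H → ℝ) ∈ B := by
    intro d
    obtain ⟨s, rfl⟩ := MulAction.exists_smul_eq G c d
    rw [← aux_cosetRep_single]
    exact hinv s _ h1
  rw [eq_top_iff]
  intro x _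
  rw [pi_eq_sum_univ' x]
  apply B.sum_mem
  intro d _
  apply B.smul_mem
  convert h2 d using 1

theorem aux_part_b {G : Type*} [Group G] (H₁ H₂ : Subgroup G)
    (h : ∃ r : G, ∀ g : G, g ∈ H₂ ↔ r * g * r⁻¹ ∈ H₁) :
      ∃ T : (G ⧸ H₁ → ℝ) ≃ₗ[ℝ] (G ⧸ H₂ → ℝ),
        (∀ x y : G ⧸ H₁ → ℝ, x ≤ y ↔ T x ≤ T y) ∧
        ∀ (s : G) (f : G ⧸ H₁ → ℝ), T (cosetRep G H₁ s f) = cosetRep G H₂ s (T f) := by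
  obtain ⟨r, hr⟩ := h
  let φ : G ⧸ H₂ ≃ G ⧸ H₁ :=
    { toFun := Quotient.map' (fun g => g * r⁻¹) (by
        intro a b hab
        rw [QuotientGroup.leftRel_apply] at hab ⊢
        have := (hr _).1 hab
        convert this using 1; group)
      invFun := Quotient.map' (fun g => g * r) (by
        intro a b hab
        rw [QuotientGroup.leftRel_apply] at hab ⊢
        rw [hr]
        convert hab using 1; group)
      left_inv := by
        intro c
        induction c using Quotient.inductionOn'
        simp
      right_inv := by
        intro c
        induction c using Quotient.inductionOn'
        simp }
  have hφ : ∀ (s : G) (c : G ⧸ H₂), φ (s • c) = s • φ c := by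
    intro s c
    induction c using QuotientGroup.induction_on with
    | H g =>
    change (QuotientGroup.mk (s * g * r⁻¹) : G ⧸ H₁) = QuotientGroup.mk (s * (g * r⁻¹))
    rw [mul_assoc]
  refine ⟨LinearEquiv.funCongrLeft ℝ ℝ φ, ?_, ?_⟩
  · intro x y
    constructor
    · intro h c; exact h (φ c)
    · intro h c
      have := h (φ.symm c)
      simpa [LinearEquiv.funCongrLeft_apply, LinearMap.funLeft_apply] using this
  · intro s f
    funext c
    simp only [LinearEquiv.funCongrLeft_apply, LinearMap.funLeft_apply, aux_cosetRep_apply, hφ]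

theorem aux_part_c {G : Type*} [Group G] (H₁ H₂ : Subgroup G)
    (h : ∃ T : (G ⧸ H₁ → ℝ) ≃ₗ[ℝ] (G ⧸ H₂ → ℝ),
        (∀ x y : G ⧸ H₁ → ℝ, x ≤ y ↔ T x ≤ T y) ∧
        ∀ (s : G) (f : G ⧸ H₁ → ℝ), T (cosetRep G H₁ s f) = cosetRep G H₂ s (T f)) :
    ∃ r : G, ∀ g : G, g ∈ H₂ ↔ r * g * r⁻¹ ∈ H₁ := by
  classical
  obtain ⟨T, hT, hTe⟩ := h
  let c : G ⧸ H₁ := QuotientGroup.mk 1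
  let e : G ⧸ H₁ → ℝ := Pi.single c 1
  have he0 : e ≠ 0 := by simp [e]
  have he : 0 ≤ e := by simp [e, Pi.single_nonneg]
  have hTe0 : 0 ≤ T e := by simpa using (hT 0 e).1 he
  have hTne : T e ≠ 0 := by simpa using he0
  obtain ⟨d, hd⟩ := Function.ne_iff.1 hTne
  have hd' : 0 < T e d := lt_of_le_of_ne (hTe0 d) (Ne.symm hd)
  have h1 : T (T.symm (Pi.single d (T e d))) ≤ T e := by
    rw [T.apply_symm_apply]
    intro d'
    by_cases hdd : d' = d
    · subst hdd; simp
    · simp only [Pi.single_apply, hdd, if_false]; exact hTe0 d'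
  have h2 := (hT _ _).2 h1
  have h3 : 0 ≤ T.symm (Pi.single d (T e d)) := by
    rw [hT, map_zero, T.apply_symm_apply]
    simp [Pi.single_nonneg, hd'.le]
  have h4 : ∃ m : ℝ, T.symm (Pi.single d (T e d)) = m • e := by
    refine ⟨T.symm (Pi.single d (T e d)) c, ?_⟩
    funext c'
    by_cases hc : c' = c
    · subst hc; simp [e]
    · have ha := h2 c'
      have hb := h3 c'
      simp only [e, Pi.single_apply, hc, if_false] at ha
      simp only [e, Pi.smul_apply, Pi.single_apply, hc, if_false, smul_zero]
      exact le_antisymm ha hb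
  obtain ⟨m, hm⟩ := h4
  have h5 : (Pi.single d (T e d) : G ⧸ H₂ → ℝ) = m • T e := by
    rw [← map_smul, ← hm, T.apply_symm_apply]
  have hm0 : m ≠ 0 := by
    rintro rfl
    have := congrFun h5 d
    simp at this
    exact hd this
  have hstab : ∀ s : G, s • c = c ↔ s • d = d := by
    intro s
    have e1 : s • c = c ↔ cosetRep G H₁ s e = e := by
      rw [aux_cosetRep_single]
      constructor
      · intro h; rw [h]
      · intro h
        by_contra hne
        have := congrFun h c
        simp [e, Pi.single_apply, Ne.symm hne] at this
    have e2 : s • d = d ↔ cosetRep G H₂ s (Pi.single d (T e d)) = Pi.single d (T e d) := by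
      rw [aux_cosetRep_single]
      constructor
      · intro h; rw [h]
      · intro h
        by_contra hne
        have := congrFun h d
        simp [Pi.single_apply, Ne.symm hne] at this
        exact hd this.symm
    rw [e1, e2, h5, map_smul, ← hTe, smul_right_inj hm0, T.injective.eq_iff]
  obtain ⟨t, ht⟩ := QuotientGroup.mk_surjective d
  refine ⟨t, fun g => ?_⟩
  have key := hstab (t * g * t⁻¹)
  rw [← ht] at key
  have k1 : (t * g * t⁻¹) • c = c ↔ t * g * t⁻¹ ∈ H₁ := by
    change (QuotientGroup.mk (t * g * t⁻¹ * 1) : G ⧸ H₁) = QuotientGroup.mk 1 ↔ _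
    rw [eq_comm, QuotientGroup.eq]; simp
  have k2 : (t * g * t⁻¹) • (QuotientGroup.mk t : G ⧸ H₂) = QuotientGroup.mk t ↔ g ∈ H₂ := by
    change (QuotientGroup.mk (t * g * t⁻¹ * t) : G ⧸ H₂) = QuotientGroup.mk t ↔ _
    rw [eq_comm, QuotientGroup.eq]
    simp [mul_assoc]
  rw [← k1, key, k2]

theorem aux_part_d {G : Type*} [Group G] [Finite G] {E : Type*} [AddCommGroup E] [Lattice E]
    [Module ℝ E] [IsOrderedAddMonoid E] [IsOrderedModule ℝ E] [Nontrivial E]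
    [FiniteDimensional ℝ E] (hE : RieszArchimedean E) (ρ : G →* (E ≃ₗ[ℝ] E))
    (hρ : IsPositiveRep ρ) (hirr : BandIrreducible ρ) :
    ∃ (H : Subgroup G) (T : E ≃ₗ[ℝ] (G ⧸ H → ℝ)),
          (∀ x y : E, x ≤ y ↔ T x ≤ T y) ∧
          ∀ (s : G) (x : E), T (ρ s x) = cosetRep G H s (T x) := by
  classical
  obtain ⟨a, ha⟩ := aux_exists_atom hE
  have hmul : ∀ (s t : G) (x : E), ρ (s * t) x = ρ s (ρ t x) := fun s t x => by
    rw [map_mul]; rfl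
  have hone : ∀ x : E, ρ 1 x = x := fun x => by rw [map_one]; rfl
  have hinv : ∀ (s : G) (x : E), ρ s (ρ s⁻¹ x) = x := fun s x => by
    rw [← hmul, mul_inv_cancel, hone]
  have hpos : ∀ (s : G) (x : E), 0 ≤ x → 0 ≤ ρ s x := fun s x hx => by
    simpa using (hρ s 0 x).1 hx
  let oi : G → (E ≃o E) := fun s =>
    { toEquiv := (ρ s).toEquiv, map_rel_iff' := fun {x y} => (hρ s x y).symm }
  have hinf : ∀ (s : G) (x y : E), ρ s (x ⊓ y) = ρ s x ⊓ ρ s y := fun s x y => (oi s).map_inf x y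
  have habs : ∀ (s : G) (x : E), ρ s |x| = |ρ s x| := fun s x => by
    have := (oi s).map_sup x (-x)
    change ρ s (x ⊔ -x) = ρ s x ⊔ ρ s (-x) at this
    rw [map_neg] at this
    exact this
  have hatom : ∀ s : G, AuxAtom (ρ s a) := by
    intro s
    refine ⟨lt_of_le_of_ne (hpos s a ha.1.le) ?_, ?_⟩
    · intro h
      exact ha.1.ne' ((ρ s).map_eq_zero_iff.1 h.symm)
    · intro x hx hxa
      obtain ⟨t, ht⟩ := ha.2 (ρ s⁻¹ x) (hpos _ _ hx) (by
        rw [hρ s, hinv]; exact hxa)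
      refine ⟨t, ?_⟩
      rw [← map_smul, ← ht, hinv]
  -- scalars in the stabilizer of the ray are trivial
  have hscal : ∀ (s : G) (l : ℝ), 0 ≤ l → ρ s a = l • a → l = 1 := by
    intro s l hl h
    have hpow : ∀ n : ℕ, ρ (s ^ n) a = l ^ n • a := by
      intro n
      induction n with
      | zero => simp [hone]
      | succ n ih => rw [pow_succ, hmul, h, map_smul, ih, smul_smul, pow_succ, mul_comm]
    have h1 := hpow (Nat.card G)
    rw [pow_card_eq_one', hone] at h1
    have h2 : (1 - l ^ Nat.card G) • a = 0 := by rw [sub_smul, one_smul, ← h1, sub_self]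
    have h3 := (smul_eq_zero.1 h2).resolve_right ha.1.ne'
    exact (pow_eq_one_iff_of_nonneg hl Nat.card_pos.ne').1 (by linarith)
  let H : Subgroup G :=
    { carrier := {g | ρ g a = a}
      one_mem' := hone a
      mul_mem' := by
        intro x y hx hy
        change ρ (x * y) a = a
        rw [hmul, hy, hx]
      inv_mem' := by
        intro x hx
        change ρ x⁻¹ a = a
        apply (ρ x).injective
        rw [hinv]; exact hx.symm }
  haveI := Fintype.ofFinite (G ⧸ H)
  let A : G ⧸ H → E := fun c => ρ c.out a
  have hAmk : ∀ g : G, A (QuotientGroup.mk g) = ρ g a := by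
    intro g
    obtain ⟨h, hh⟩ := QuotientGroup.mk_out_eq_mul H g
    change ρ (QuotientGroup.mk g : G ⧸ H).out a = _
    rw [hh, hmul]
    congr 1
    exact h.2
  have hAs : ∀ (s : G) (c : G ⧸ H), A (s • c) = ρ s (A c) := by
    intro s c
    induction c using QuotientGroup.induction_on with
    | H g => rw [hAmk, ← hmul, ← hAmk]; rfl
  have hAat : ∀ c, AuxAtom (A c) := fun c => hatom _
  have hA0 : ∀ c, 0 ≤ A c := fun c => (hAat c).1.le
  have hdis : ∀ c d, c ≠ d → A c ⊓ A d = 0 := by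
    intro c d hcd
    induction c using QuotientGroup.induction_on with
    | H g =>
    induction d using QuotientGroup.induction_on with
    | H k =>
    by_contra hne
    apply hcd
    have hw : 0 ≤ A (QuotientGroup.mk g) ⊓ A (QuotientGroup.mk k) := le_inf (hA0 _) (hA0 _)
    obtain ⟨t, ht⟩ := (hAat _).2 _ hw inf_le_left
    obtain ⟨r, hr⟩ := (hAat _).2 _ hw inf_le_right
    have hr0 : r ≠ 0 := by rintro rfl; exact hne (by simpa using hr)
    rw [ht, hAmk, hAmk] at hr
    have h1 : ρ (g⁻¹ * k) a = (r⁻¹ * t) • a := by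
      apply (ρ g).injective
      rw [← hmul, mul_inv_cancel_left, map_smul, mul_smul, hr, smul_smul, inv_mul_cancel₀ hr0,
        one_smul]
    have h2 : 0 ≤ r⁻¹ * t := by
      by_contra hlt
      push Not at hlt
      have h3 := hpos (g⁻¹ * k) a ha.1.le
      rw [h1] at h3
      have h4 := smul_nonpos_of_nonpos_of_nonneg hlt.le ha.1.le
      rcases smul_eq_zero.1 (le_antisymm h4 h3) with h5 | h5
      · exact hlt.ne h5
      · exact ha.1.ne' h5
    have h3 := hscal _ _ h2 h1
    rw [h3, one_smul] at h1
    exact QuotientGroup.eq.2 h1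
  have hbot : auxDisj A hA0 = ⊥ := by
    rcases hirr (auxDisj A hA0) (aux_disj_band A hA0) (by
      intro s x hx c
      have h1 := hx (s⁻¹ • c)
      have h2 : A c = ρ s (A (s⁻¹ • c)) := by rw [← hAs, smul_inv_smul]
      rw [h2, ← habs, ← hinf, h1, map_zero]) with h | h
    · exact h
    · exfalso
      have h1 : a ∈ auxDisj A hA0 := h ▸ Submodule.mem_top
      have h2 := h1 (QuotientGroup.mk 1)
      rw [hAmk, hone, abs_of_nonneg ha.1.le, inf_idem] at h2
      exact ha.1.ne' h2
  let S : (G ⧸ H → ℝ) →ₗ[ℝ] E := Fintype.linearCombination ℝ A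
  have hS : ∀ f, S f = ∑ c, f c • A c := fun f => rfl
  have hSpos : ∀ f, 0 ≤ S f ↔ 0 ≤ f := by
    intro f
    constructor
    · intro h c
      exact aux_sum_nonneg A (fun c => (hAat c).1) hdis f h c
    · intro h
      rw [hS]
      exact Finset.sum_nonneg fun c _ => smul_nonneg (h c) (hA0 c)
  have hinj : Function.Injective S := by
    rw [injective_iff_map_eq_zero]
    intro f hf
    apply le_antisymm
    · have := (hSpos (-f)).1 (by rw [map_neg, hf, neg_zero])
      simpa using this
    · exact (hSpos f).1 hf.ge
  have hsurj : Function.Surjective S := by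
    intro x
    obtain ⟨f, hf⟩ := aux_span hE A hAat hdis hbot (posPart_nonneg x)
    obtain ⟨g, hg⟩ := aux_span hE A hAat hdis hbot (negPart_nonneg x)
    refine ⟨f - g, ?_⟩
    rw [map_sub, hS, hS, ← hf, ← hg, posPart_sub_negPart]
  let e := LinearEquiv.ofBijective S ⟨hinj, hsurj⟩
  have he : ∀ f, e f = S f := fun f => rfl
  refine ⟨H, e.symm, ?_, ?_⟩
  · intro x y
    obtain ⟨f, rfl⟩ := e.surjective x
    obtain ⟨g, rfl⟩ := e.surjective y
    rw [e.symm_apply_apply, e.symm_apply_apply, ← sub_nonneg, ← map_sub, he, hSpos, sub_nonneg]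
  · intro s x
    obtain ⟨f, rfl⟩ := e.surjective x
    rw [e.symm_apply_apply, e.symm_apply_eq, he, he, hS, hS, map_sum]
    symm
    refine Fintype.sum_equiv (MulAction.toPerm s⁻¹) _ _ ?_
    intro c
    rw [map_smul, aux_cosetRep_apply, MulAction.toPerm_apply, ← hAs, smul_inv_smul]

universe u

/-- For a finite group `G`: (a) each canonical representation `π^H` on `C(G/H)` is band
irreducible; (b) conjugate subgroups give order equivalent representations `π^H`;
(c) subgroups with order equivalent representations `π^H` are conjugate; (d) every band
irreducible positive representation of `G` in a nonzero finite dimensional Archimedean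
Riesz space is order equivalent to some `π^H`. -/
theorem stmt16 (G : Type*) [Group G] [Finite G] :
    (∀ H : Subgroup G, BandIrreducible (cosetRep G H)) ∧
    (∀ H₁ H₂ : Subgroup G, (∃ r : G, ∀ g : G, g ∈ H₂ ↔ r * g * r⁻¹ ∈ H₁) →
      ∃ T : (G ⧸ H₁ → ℝ) ≃ₗ[ℝ] (G ⧸ H₂ → ℝ),
        (∀ x y : G ⧸ H₁ → ℝ, x ≤ y ↔ T x ≤ T y) ∧
        ∀ (s : G) (f : G ⧸ H₁ → ℝ), T (cosetRep G H₁ s f) = cosetRep G H₂ s (T f)) ∧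
    (∀ H₁ H₂ : Subgroup G,
      (∃ T : (G ⧸ H₁ → ℝ) ≃ₗ[ℝ] (G ⧸ H₂ → ℝ),
        (∀ x y : G ⧸ H₁ → ℝ, x ≤ y ↔ T x ≤ T y) ∧
        ∀ (s : G) (f : G ⧸ H₁ → ℝ), T (cosetRep G H₁ s f) = cosetRep G H₂ s (T f)) →
      ∃ r : G, ∀ g : G, g ∈ H₂ ↔ r * g * r⁻¹ ∈ H₁) ∧
    (∀ (E : Type u) [AddCommGroup E] [Lattice E] [Module ℝ E],
      (∀ x y z : E, x ≤ y → x + z ≤ y + z) →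
      (∀ (c : ℝ) (x : E), 0 ≤ c → 0 ≤ x → 0 ≤ c • x) →
      Nontrivial E → FiniteDimensional ℝ E → RieszArchimedean E →
      ∀ ρ : G →* (E ≃ₗ[ℝ] E), IsPositiveRep ρ → BandIrreducible ρ →
        ∃ (H : Subgroup G) (T : E ≃ₗ[ℝ] (G ⧸ H → ℝ)),
          (∀ x y : E, x ≤ y ↔ T x ≤ T y) ∧
          ∀ (s : G) (x : E), T (ρ s x) = cosetRep G H s (T x)) := by
  refine ⟨aux_part_a, aux_part_b, aux_part_c, ?_⟩
  intro E _ _ _ hadd hsmul _ _ hA ρ hρ hirr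
  haveI : IsOrderedAddMonoid E := { add_le_add_left := fun a b h c => hadd a b c h }
  haveI h1 : PosSMulMono ℝ E := PosSMulMono.of_smul_nonneg fun c hc x hx => hsmul c x hc hx
  haveI : IsOrderedModule ℝ E :=
    { smul_le_smul_of_nonneg_right := fun b hb c d hcd => by
        have := hsmul (d - c) b (sub_nonneg.2 hcd) hb
        rw [sub_smul, sub_nonneg] at this
        exact this }
  exact aux_part_d hA ρ hρ hirr
end

section
/- Let G be a finite group and let H₁, …, H_k be representatives of the conjugacy classes of subgroups of G. Let E be a finite dimensional Archimedean Riesz space and ρ : G → Aut⁺(E) a positive representation. Then there exist unique nonnegative integers n₁, …, n_k such that ρ is order equivalent to the order direct sum n₁ π^{H₁} ⊕ ⋯ ⊕ n_k π^{H_k}, where n_i π^{H_i} denotes the n_i-fold order direct sum of π^{H_i}. -/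
/-- The order direct sum `n₁ π^{H₁} ⊕ ⋯ ⊕ n_k π^{H_k}` of multiples of the canonical
representations, acting componentwise on the order direct sum of the corresponding
function spaces. -/
noncomputable def multiRep (G : Type*) [Group G] {k : ℕ} (H : Fin k → Subgroup G)
    (n : Fin k → ℕ) :
    G →* ((∀ i : Fin k, Fin (n i) → (G ⧸ H i → ℝ)) ≃ₗ[ℝ]
          (∀ i : Fin k, Fin (n i) → (G ⧸ H i → ℝ))) where
  toFun s := LinearEquiv.piCongrRight fun i =>
    LinearEquiv.piCongrRight fun _ => cosetRep G (H i) s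
  map_one' := by
    apply LinearEquiv.ext
    intro f
    funext i j
    simp
  map_mul' s t := by
    apply LinearEquiv.ext
    intro f
    funext i j
    simp only [map_mul]
    rfl

section Helpers17

variable {E : Type*} [AddCommGroup E] [Lattice E] [IsOrderedAddMonoid E] [Module ℝ E]

lemma h17_inf_add {a b c : E} (ha : 0 ≤ a) (hb : 0 ≤ b) (hc : 0 ≤ c)
    (hab : a ⊓ b = 0) (hac : a ⊓ c = 0) : a ⊓ (b + c) = 0 := by
  apply le_antisymm _ (le_inf ha (add_nonneg hb hc))
  have h1 : a ⊓ (b + c) ≤ b := by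
    have : a ⊓ (b + c) - b ≤ a ⊓ c := by
      apply le_inf
      · exact (sub_le_self _ hb).trans inf_le_left
      · rw [sub_le_iff_le_add, add_comm]; exact inf_le_right
    rw [hac] at this
    exact sub_nonpos.mp this
  rw [← hab]
  exact le_inf inf_le_left h1

lemma h17_smul_le (hsmul : ∀ (c : ℝ) (x : E), 0 ≤ c → 0 ≤ x → 0 ≤ c • x)
    {s t : ℝ} (h : s ≤ t) {x : E} (hx : 0 ≤ x) : s • x ≤ t • x := by
  have := hsmul (t - s) x (by linarith) hx
  rw [sub_smul] at this
  exact sub_nonneg.mp this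

lemma h17_smul_le_smul (hsmul : ∀ (c : ℝ) (x : E), 0 ≤ c → 0 ≤ x → 0 ≤ c • x)
    {t : ℝ} (ht : 0 ≤ t) {x y : E} (h : x ≤ y) : t • x ≤ t • y := by
  have := hsmul t (y - x) ht (sub_nonneg.mpr h)
  rw [smul_sub] at this
  exact sub_nonneg.mp this

lemma h17_inf_smul (hsmul : ∀ (c : ℝ) (x : E), 0 ≤ c → 0 ≤ x → 0 ≤ c • x)
    {a b : E} (ha : 0 ≤ a) (hb : 0 ≤ b) (hab : a ⊓ b = 0) {t : ℝ} (ht : 0 ≤ t) :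
    a ⊓ t • b = 0 := by
  obtain ⟨n, hn⟩ := exists_nat_ge t
  have hnb : ∀ n : ℕ, a ⊓ n • b = 0 := by
    intro n
    induction n with
    | zero => simpa using ha
    | succ n ih =>
      rw [succ_nsmul]
      exact h17_inf_add ha (nsmul_nonneg hb n) hb ih hab
  apply le_antisymm _ (le_inf ha (hsmul t b ht hb))
  rw [← hnb n]
  apply inf_le_inf_left
  have := h17_smul_le hsmul hn hb
  rwa [Nat.cast_smul_eq_nsmul] at this

lemma h17_inf_smul_smul (hsmul : ∀ (c : ℝ) (x : E), 0 ≤ c → 0 ≤ x → 0 ≤ c • x)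
    {a b : E} (ha : 0 ≤ a) (hb : 0 ≤ b) (hab : a ⊓ b = 0) {s t : ℝ} (hs : 0 ≤ s) (ht : 0 ≤ t) :
    s • a ⊓ t • b = 0 := by
  have h1 := h17_inf_smul hsmul ha hb hab ht
  rw [inf_comm] at h1 ⊢
  exact h17_inf_smul hsmul (hsmul t b ht hb) ha h1 hs

lemma h17_inf_sum {ι : Type*} {a : E} (ha : 0 ≤ a) (s : Finset ι) (f : ι → E)
    (hf : ∀ i ∈ s, 0 ≤ f i) (h : ∀ i ∈ s, a ⊓ f i = 0) : a ⊓ ∑ i ∈ s, f i = 0 := by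
  classical
  induction s using Finset.induction_on with
  | empty => simpa using ha
  | insert i s hi ih =>
    rw [Finset.sum_insert hi]
    apply h17_inf_add ha (hf i (by simp))
    · exact Finset.sum_nonneg fun j hj => hf j (by simp [hj])
    · exact h i (by simp)
    · exact ih (fun j hj => hf j (by simp [hj])) (fun j hj => h j (by simp [hj]))

/-- Finite sets of pairwise disjoint strictly positive elements. -/
def H17Disj (S : Finset E) : Prop :=
  (∀ x ∈ S, 0 < x) ∧ ∀ x ∈ S, ∀ y ∈ S, x ≠ y → x ⊓ y = 0

lemma h17_linInd (hsmul : ∀ (c : ℝ) (x : E), 0 ≤ c → 0 ≤ x → 0 ≤ c • x)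
    {S : Finset E} (hS : H17Disj S) : LinearIndependent ℝ (fun x : S => (x : E)) := by
  rw [linearIndependent_iff']
  intro s g hg
  have hpos : ∀ i : S, (0 : E) ≤ i := fun i => (hS.1 i i.2).le
  have hP : ∀ i ∈ s, 0 ≤ max (g i) 0 • (i : E) := fun i _ =>
    hsmul _ _ (le_max_right _ _) (hpos i)
  have hN : ∀ i ∈ s, 0 ≤ max (-g i) 0 • (i : E) := fun i _ =>
    hsmul _ _ (le_max_right _ _) (hpos i)
  have heq : ∑ i ∈ s, max (g i) 0 • (i : E) = ∑ i ∈ s, max (-g i) 0 • (i : E) := by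
    rw [← sub_eq_zero, ← Finset.sum_sub_distrib, ← hg]
    apply Finset.sum_congr rfl
    intro i _
    rw [← sub_smul]
    congr 1
    rcases le_total (g i) 0 with h | h
    · rw [max_eq_right h, max_eq_left (by linarith)]; ring
    · rw [max_eq_left h, max_eq_right (by linarith)]; ring
  have hdisj : (∑ i ∈ s, max (g i) 0 • (i : E)) ⊓ (∑ i ∈ s, max (-g i) 0 • (i : E)) = 0 := by
    apply h17_inf_sum (Finset.sum_nonneg hP) _ _ hN
    intro j hj
    rw [inf_comm]
    apply h17_inf_sum (hN j hj) _ _ hP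
    intro i hi
    by_cases hij : i = j
    · subst hij
      rcases le_total (g i) 0 with h | h
      · rw [max_eq_right h, zero_smul]
        exact inf_eq_right.mpr (hN i hi)
      · rw [max_eq_right (show -g i ≤ 0 by linarith), zero_smul]
        exact inf_eq_left.mpr (hP i hi)
    · apply h17_inf_smul_smul hsmul (hpos j) (hpos i) _ (le_max_right _ _) (le_max_right _ _)
      exact hS.2 j j.2 i i.2 (fun h => hij (Subtype.ext h.symm))
  rw [← heq, inf_idem] at hdisj
  have h1 := (Finset.sum_eq_zero_iff_of_nonneg hP).mp hdisj
  rw [heq] at hdisj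
  have h2 := (Finset.sum_eq_zero_iff_of_nonneg hN).mp hdisj
  intro i hi
  have hne : (i : E) ≠ 0 := (hS.1 i i.2).ne'
  have a1 := (smul_eq_zero.mp (h1 i hi)).resolve_right hne
  have a2 := (smul_eq_zero.mp (h2 i hi)).resolve_right hne
  have b1 : g i ≤ 0 := by rw [← a1]; exact le_max_left _ _
  have b2 : -g i ≤ 0 := by rw [← a2]; exact le_max_left _ _
  linarith

lemma h17_arch (hsmul : ∀ (c : ℝ) (x : E), 0 ≤ c → 0 ≤ x → 0 ≤ c • x)
    (harch : RieszArchimedean E) {w v : E} (hv : 0 ≤ v)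
    (h : ∀ ε : ℝ, 0 < ε → w ≤ ε • v) : w ≤ 0 := by
  have : w ⊔ 0 = 0 := by
    apply harch (w ⊔ 0) v
    intro n hn
    refine ⟨nsmul_nonneg le_sup_right n, ?_⟩
    have hn' : (0 : ℝ) < n := by exact_mod_cast hn
    have h1 : w ⊔ 0 ≤ (1 / n : ℝ) • v :=
      sup_le (h _ (by positivity)) (hsmul _ _ (by positivity) hv)
    have h2 := h17_smul_le_smul hsmul hn'.le h1
    rw [smul_smul, mul_one_div_cancel hn'.ne', one_smul, Nat.cast_smul_eq_nsmul] at h2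
    exact h2
  exact sup_eq_right.mp this

lemma h17_sSup_smul_le (hsmul : ∀ (c : ℝ) (x : E), 0 ≤ c → 0 ≤ x → 0 ≤ c • x)
    (harch : RieszArchimedean E) {e x : E} (he : 0 ≤ e) {A : Set ℝ} (hne : A.Nonempty)
    (hA : ∀ t ∈ A, t • e ≤ x) : sSup A • e ≤ x := by
  rw [← sub_nonpos]
  apply h17_arch hsmul harch he
  intro ε hε
  obtain ⟨t, ht, hlt⟩ := exists_lt_of_lt_csSup hne (show sSup A - ε < sSup A by linarith)
  have h1 := h17_smul_le hsmul (show sSup A ≤ t + ε by linarith) he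
  rw [add_smul] at h1
  rw [sub_le_iff_le_add, add_comm]
  exact h1.trans (by gcongr; exact hA t ht)

lemma h17_atom (hsmul : ∀ (c : ℝ) (x : E), 0 ≤ c → 0 ≤ x → 0 ≤ c • x)
    (harch : RieszArchimedean E) {e : E} (he : 0 ≤ e)
    (hat : ∀ x y : E, 0 ≤ x → 0 ≤ y → x ⊓ y = 0 → x ≤ e → y ≤ e → x = 0 ∨ y = 0)
    {x : E} (hx : 0 ≤ x) (hxe : x ≤ e) : ∃ t : ℝ, 0 ≤ t ∧ x = t • e := by
  have htot : ∀ t : ℝ, 0 ≤ t → t ≤ 1 → t • e ≤ x ∨ x ≤ t • e := by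
    intro t ht ht1
    have hte : t • e ≤ e := by simpa using h17_smul_le hsmul ht1 he
    have hte0 := hsmul t e ht he
    rcases hat (x - x ⊓ t • e) (t • e - x ⊓ t • e) (sub_nonneg.mpr inf_le_left)
      (sub_nonneg.mpr inf_le_right) (by rw [← inf_sub, sub_self])
      ((sub_le_self _ (le_inf hx hte0)).trans hxe)
      ((sub_le_self _ (le_inf hx hte0)).trans hte) with h | h
    · right; exact inf_eq_left.mp (sub_eq_zero.mp h).symm
    · left; exact inf_eq_right.mp (sub_eq_zero.mp h).symm
  set A : Set ℝ := {t | 0 ≤ t ∧ t ≤ 1 ∧ t • e ≤ x} with hA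
  have h0 : (0 : ℝ) ∈ A := ⟨le_rfl, zero_le_one, by simpa using hx⟩
  have hbdd : BddAbove A := ⟨1, fun t ht => ht.2.1⟩
  have hs0 : 0 ≤ sSup A := le_csSup hbdd h0
  refine ⟨sSup A, hs0, le_antisymm ?_ ?_⟩
  · rw [← sub_nonpos]
    apply h17_arch hsmul harch he
    intro ε hε
    rw [sub_le_iff_le_add, add_comm, ← add_smul]
    by_cases h1 : sSup A + ε ≤ 1
    · rcases htot (sSup A + ε) (by linarith) h1 with h | h
      · have := le_csSup hbdd (show sSup A + ε ∈ A from ⟨by linarith, h1, h⟩)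
        linarith
      · exact h
    · refine hxe.trans ?_
      simpa using h17_smul_le hsmul (not_le.mp h1).le he
  · exact h17_sSup_smul_le hsmul harch he ⟨0, h0⟩ fun t ht => ht.2.2

/-- A basis whose positive cone is the coordinatewise one. -/
def H17Pos {ι : Type*} (b : Module.Basis ι ℝ E) : Prop :=
  ∀ v : E, 0 ≤ v ↔ ∀ i, 0 ≤ b.repr v i

lemma h17_exists_max [FiniteDimensional ℝ E]
    (hsmul : ∀ (c : ℝ) (x : E), 0 ≤ c → 0 ≤ x → 0 ≤ c • x) :
    ∃ S : Finset E, H17Disj S ∧ ∀ S' : Finset E, H17Disj S' → S'.card ≤ S.card := by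
  let A : Set ℕ := {n | ∃ S : Finset E, H17Disj S ∧ S.card = n}
  have hne : A.Nonempty := ⟨0, ∅, ⟨by simp, by simp⟩, rfl⟩
  have hb : BddAbove A := by
    refine ⟨Module.finrank ℝ E, ?_⟩
    rintro n ⟨S, hS, rfl⟩
    simpa using (h17_linInd hsmul hS).fintype_card_le_finrank
  obtain ⟨S, hS, hc⟩ := Nat.sSup_mem hne hb
  exact ⟨S, hS, fun S' hS' => hc ▸ le_csSup hb ⟨S', hS', rfl⟩⟩

lemma h17_insert [DecidableEq E] {S : Finset E} (hS : H17Disj S) {x : E} (hx : 0 < x)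
    (hd : ∀ y ∈ S, x ⊓ y = 0) : H17Disj (insert x S) ∧ x ∉ S := by
  refine ⟨⟨?_, ?_⟩, ?_⟩
  · intro y hy
    rcases Finset.mem_insert.mp hy with rfl | hy
    · exact hx
    · exact hS.1 y hy
  · intro y hy z hz hne
    rcases Finset.mem_insert.mp hy with rfl | hy
    · rcases Finset.mem_insert.mp hz with rfl | hz
      · exact absurd rfl hne
      · exact hd z hz
    · rcases Finset.mem_insert.mp hz with rfl | hz
      · rw [inf_comm]; exact hd y (by assumption)
      · exact hS.2 y hy z hz hne
  · intro h
    have := hd x h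
    rw [inf_idem] at this
    exact hx.ne' this

lemma h17_max_atom {S : Finset E} (hS : H17Disj S)
    (hmax : ∀ S' : Finset E, H17Disj S' → S'.card ≤ S.card) {e : E} (he : e ∈ S)
    (x y : E) (hx : 0 ≤ x) (hy : 0 ≤ y) (hxy : x ⊓ y = 0) (hxe : x ≤ e) (hye : y ≤ e) :
    x = 0 ∨ y = 0 := by
  classical
  by_contra! hcon
  have hx' : 0 < x := lt_of_le_of_ne hx hcon.1.symm
  have hy' : 0 < y := lt_of_le_of_ne hy hcon.2.symm
  have hS1 : H17Disj (S.erase e) :=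
    ⟨fun z hz => hS.1 z (Finset.mem_of_mem_erase hz), fun z hz w hw =>
      hS.2 z (Finset.mem_of_mem_erase hz) w (Finset.mem_of_mem_erase hw)⟩
  have key : ∀ z, 0 ≤ z → z ≤ e → ∀ w ∈ S.erase e, z ⊓ w = 0 := by
    intro z hz hze w hw
    apply le_antisymm
    · rw [← hS.2 e he w (Finset.mem_of_mem_erase hw) (Finset.ne_of_mem_erase hw).symm]
      exact inf_le_inf_right _ hze
    · exact le_inf hz (hS1.1 w hw).le
  obtain ⟨h2, h2'⟩ := h17_insert hS1 hx' (key x hx hxe)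
  obtain ⟨h3, h3'⟩ := h17_insert h2 hy' (by
    intro w hw
    rcases Finset.mem_insert.mp hw with rfl | hw
    · rw [inf_comm]; exact hxy
    · exact key y hy hye w hw)
  have := hmax _ h3
  rw [Finset.card_insert_of_notMem h3', Finset.card_insert_of_notMem h2',
    Finset.card_erase_of_mem he] at this
  have := Finset.card_pos.mpr ⟨e, he⟩
  omega

lemma h17_coefs (hsmul : ∀ (c : ℝ) (x : E), 0 ≤ c → 0 ≤ x → 0 ≤ c • x)
    (harch : RieszArchimedean E) {S : Finset E} (hS : H17Disj S)
    (hmax : ∀ S' : Finset E, H17Disj S' → S'.card ≤ S.card) {x : E} (hx : 0 ≤ x) :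
    ∃ c : E → ℝ, (∀ e ∈ S, 0 ≤ c e) ∧ x = ∑ e ∈ S, c e • e := by
  classical
  let A : E → Set ℝ := fun e => {t | 0 ≤ t ∧ t • e ≤ x}
  have h0 : ∀ e, (0 : ℝ) ∈ A e := fun e => ⟨le_rfl, by simpa using hx⟩
  have hbdd : ∀ e ∈ S, BddAbove (A e) := by
    intro e he
    by_contra hcon
    apply (hS.1 e he).ne'
    apply harch e x
    intro n hn
    refine ⟨nsmul_nonneg (hS.1 e he).le n, ?_⟩
    rw [not_bddAbove_iff] at hcon
    obtain ⟨t, ht, hnt⟩ := hcon n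
    rw [← Nat.cast_smul_eq_nsmul ℝ]
    exact (h17_smul_le hsmul hnt.le (hS.1 e he).le).trans ht.2
  have hc0 : ∀ e ∈ S, 0 ≤ sSup (A e) := fun e he => le_csSup (hbdd e he) (h0 e)
  have hle : ∀ e ∈ S, sSup (A e) • e ≤ x := fun e he =>
    h17_sSup_smul_le hsmul harch (hS.1 e he).le ⟨0, h0 e⟩ fun t ht => ht.2
  refine ⟨fun e => sSup (A e), hc0, ?_⟩
  have hsum : ∀ s ⊆ S, ∑ e ∈ s, sSup (A e) • e ≤ x := by
    intro s
    induction s using Finset.induction_on with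
    | empty => intro _; simpa using hx
    | insert e s hes ih =>
      intro hs
      have heS : e ∈ S := hs (by simp)
      have hsS : s ⊆ S := fun z hz => hs (by simp [hz])
      rw [Finset.sum_insert hes]
      have hd : sSup (A e) • e ⊓ ∑ e ∈ s, sSup (A e) • e = 0 := by
        apply h17_inf_sum (hsmul _ _ (hc0 e heS) (hS.1 e heS).le)
        · intro i hi; exact hsmul _ _ (hc0 i (hsS hi)) (hS.1 i (hsS hi)).le
        · intro i hi
          apply h17_inf_smul_smul hsmul (hS.1 e heS).le (hS.1 i (hsS hi)).le _ (hc0 e heS)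
            (hc0 i (hsS hi))
          exact hS.2 e heS i (hsS hi) (fun h => hes (h ▸ hi))
      rw [← inf_add_sup, hd, zero_add]
      exact sup_le (hle e heS) (ih hsS)
  have hy := sub_nonneg.mpr (hsum S subset_rfl)
  set y := x - ∑ e ∈ S, sSup (A e) • e with hydef
  have hdis : ∀ e ∈ S, y ⊓ e = 0 := by
    intro e he
    have he0 := (hS.1 e he).le
    obtain ⟨t, ht, hte⟩ := h17_atom hsmul harch he0 (h17_max_atom hS hmax he)
      (le_inf hy he0) (inf_le_right : y ⊓ e ≤ e)
    have h1 : t • e ≤ y := hte ▸ inf_le_left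
    have h2 : sSup (A e) • e ≤ ∑ e ∈ S, sSup (A e) • e :=
      Finset.single_le_sum (f := fun e => sSup (A e) • e)
        (fun i hi => hsmul _ _ (hc0 i hi) (hS.1 i hi).le) he
    have h3 : (t + sSup (A e)) • e ≤ x := by
      rw [add_smul]
      calc _ ≤ y + ∑ e ∈ S, sSup (A e) • e := add_le_add h1 h2
        _ = x := by rw [hydef]; abel
    have h4 := le_csSup (hbdd e he) (show t + sSup (A e) ∈ A e from
      ⟨add_nonneg ht (hc0 e he), h3⟩)
    have : t = 0 := by linarith
    rw [hte, this, zero_smul]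
  have hy0 : y = 0 := by
    by_contra hne
    obtain ⟨h1, h2⟩ := h17_insert hS (lt_of_le_of_ne hy (Ne.symm hne)) hdis
    have := hmax _ h1
    rw [Finset.card_insert_of_notMem h2] at this
    omega
  exact sub_eq_zero.mp hy0

lemma h17_pos_basis [FiniteDimensional ℝ E]
    (hsmul : ∀ (c : ℝ) (x : E), 0 ≤ c → 0 ≤ x → 0 ≤ c • x)
    (harch : RieszArchimedean E) :
    ∃ (S : Finset E) (b : Module.Basis S ℝ E), H17Pos b := by
  obtain ⟨S, hS, hmax⟩ := h17_exists_max (E := E) hsmul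
  have hmem : ∀ x : E, 0 ≤ x → x ∈ Submodule.span ℝ (Set.range fun x : S => (x : E)) := by
    intro x hx
    obtain ⟨c, hc, hxc⟩ := h17_coefs hsmul harch hS hmax hx
    rw [hxc]
    exact Submodule.sum_mem _ fun e he => Submodule.smul_mem _ _
      (Submodule.subset_span ⟨⟨e, he⟩, rfl⟩)
  have hspan : ⊤ ≤ Submodule.span ℝ (Set.range fun x : S => (x : E)) := by
    intro x _
    have : x = (x ⊔ 0) - ((x ⊔ 0) - x) := by abel
    rw [this]
    exact Submodule.sub_mem _ (hmem _ le_sup_right) (hmem _ (sub_nonneg.mpr le_sup_left))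
  let b := Module.Basis.mk (h17_linInd hsmul hS) hspan
  have hb : ∀ i : S, b i = i := fun i => by simp [b]
  refine ⟨S, b, fun v => ⟨fun hv i => ?_, fun hv => ?_⟩⟩
  · obtain ⟨c, hc, hxc⟩ := h17_coefs hsmul harch hS hmax hv
    have : v = ∑ i : S, c i • b i := by
      simp only [hb]
      rw [hxc]
      exact (Finset.sum_coe_sort S (fun e => c e • e)).symm
    rw [this, b.repr_sum_self (fun i : S => c i)]
    exact hc i i.2
  · rw [← b.sum_repr v]
    exact Finset.sum_nonneg fun i _ => hsmul _ _ (hv i) (by rw [hb]; exact (hS.1 i i.2).le)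

lemma h17_two_bases {ι κ : Type*} {b : Module.Basis ι ℝ E} {b' : Module.Basis κ ℝ E}
    (hb : H17Pos b) (hb' : H17Pos b') (i : ι) :
    ∃ (j : κ) (c : ℝ), 0 < c ∧ b i = c • b' j := by
  classical
  have h1 : 0 ≤ b i := (hb _).mpr fun j => by
    rw [b.repr_self, Finsupp.single_apply]; split_ifs <;> norm_num
  have h2 := (hb' _).mp h1
  obtain ⟨j, hj⟩ : ∃ j, b'.repr (b i) j ≠ 0 := by
    by_contra! hcon
    exact b.ne_zero i (b'.repr.map_eq_zero_iff.mp (Finsupp.ext hcon))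
  have hc : 0 < b'.repr (b i) j := lt_of_le_of_ne (h2 j) hj.symm
  set c := b'.repr (b i) j with hcdef
  have h3 : 0 ≤ b' j := (hb' _).mpr fun l => by
    rw [b'.repr_self, Finsupp.single_apply]; split_ifs <;> norm_num
  have h4 : 0 ≤ b i - c • b' j := (hb' _).mpr fun l => by
    rw [map_sub, map_smul, b'.repr_self, Finsupp.sub_apply, Finsupp.smul_apply,
      Finsupp.single_apply]
    split_ifs with h
    · subst h; simp [hcdef]
    · simpa using h2 l
  have h5 := (hb _).mp h3
  have h6 := (hb _).mp h4
  have h7 : ∀ l, l ≠ i → b.repr (b' j) l = 0 := by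
    intro l hl
    have := h6 l
    rw [map_sub, map_smul, b.repr_self, Finsupp.sub_apply, Finsupp.smul_apply,
      Finsupp.single_eq_of_ne hl] at this
    have h8 := h5 l
    simp only [smul_eq_mul, zero_sub, Left.nonneg_neg_iff] at this
    nlinarith
  have h8 : b' j = b.repr (b' j) i • b i := by
    apply b.repr.injective
    ext l
    rw [map_smul, b.repr_self, Finsupp.smul_apply]
    by_cases hl : l = i
    · subst hl; simp
    · rw [h7 l hl, Finsupp.single_eq_of_ne hl]; simp
  have hd : b.repr (b' j) i ≠ 0 := by
    intro h
    rw [h, zero_smul] at h8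
    exact b'.ne_zero j h8
  refine ⟨j, (b.repr (b' j) i)⁻¹, inv_pos.mpr (lt_of_le_of_ne (h5 i) hd.symm), ?_⟩
  generalize b.repr (b' j) i = d at h8 hd
  rw [h8, smul_smul, inv_mul_cancel₀ hd, one_smul]

end Helpers17

section Helpers17G

variable {G E : Type*} [Group G] [AddCommGroup E] [Lattice E] [IsOrderedAddMonoid E] [Module ℝ E]

/-- The index set of the canonical basis of the order direct sum. -/
abbrev H17Idx {k : ℕ} (H : Fin k → Subgroup G) (N : Fin k → ℕ) : Type _ :=
  Σ i : Fin k, Fin (N i) × (G ⧸ H i)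

/-- The action on the index set. -/
def h17act {k : ℕ} (H : Fin k → Subgroup G) (N : Fin k → ℕ) (s : G) (p : H17Idx H N) :
    H17Idx H N := ⟨p.1, p.2.1, s • p.2.2⟩

/-- Uncurrying. -/
def h17curry {k : ℕ} (H : Fin k → Subgroup G) (N : Fin k → ℕ) :
    (∀ i : Fin k, Fin (N i) → (G ⧸ H i → ℝ)) ≃ₗ[ℝ] (H17Idx H N → ℝ) where
  toFun f := fun p => f p.1 p.2.1 p.2.2
  invFun f := fun i j c => f ⟨i, j, c⟩
  map_add' _ _ := rfl
  map_smul' _ _ := rfl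
  left_inv _ := rfl
  right_inv _ := rfl

lemma h17_le_iff {ι : Type*} {b : Module.Basis ι ℝ E} (hb : H17Pos b) (x y : E) :
    x ≤ y ↔ ∀ i, b.repr x i ≤ b.repr y i := by
  rw [← sub_nonneg, hb]
  simp

lemma h17_bridge [Finite G] {k : ℕ} (H : Fin k → Subgroup G) (N : Fin k → ℕ)
    (ρ : G →* (E ≃ₗ[ℝ] E)) :
    (∃ T : E ≃ₗ[ℝ] (∀ i : Fin k, Fin (N i) → (G ⧸ H i → ℝ)),
      (∀ x y : E, x ≤ y ↔ T x ≤ T y) ∧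
      ∀ (s : G) (x : E), T (ρ s x) = multiRep G H N s (T x)) ↔
    ∃ b : Module.Basis (H17Idx H N) ℝ E, H17Pos b ∧
      ∀ s p, ρ s (b p) = b (h17act H N s p) := by
  classical
  have := fun i => Fintype.ofFinite (G ⧸ H i)
  constructor
  · rintro ⟨T, hT, hTρ⟩
    let b := Module.Basis.ofEquivFun (T.trans (h17curry H N))
    have hr : ∀ x p, b.repr x p = T x p.1 p.2.1 p.2.2 := fun x p => by
      simp [b, h17curry]
    refine ⟨b, fun v => ?_, fun s p => ?_⟩
    · rw [hT, map_zero]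
      simp only [hr]
      exact ⟨fun h p => h p.1 p.2.1 p.2.2, fun h i j c => h ⟨i, j, c⟩⟩
    · apply b.repr.injective
      ext q
      rw [hr, hTρ]
      have : (multiRep G H N s (T (b p))) q.1 q.2.1 q.2.2
        = b.repr (b p) (h17act H N s⁻¹ q) := by rw [hr]; rfl
      rw [this, b.repr_self, b.repr_self,
        Finsupp.single_apply, Finsupp.single_apply]
      congr 1
      apply propext
      constructor
      · rintro rfl
        exact Sigma.ext rfl (heq_of_eq (Prod.ext rfl (smul_inv_smul s _)))
      · rintro rfl
        exact Sigma.ext rfl (heq_of_eq (Prod.ext rfl (inv_smul_smul s _).symm))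
  · rintro ⟨b, hb, hbρ⟩
    have hr : ∀ x i j c, (b.equivFun.trans (h17curry H N).symm) x i j c = b.repr x ⟨i, j, c⟩ :=
      fun _ _ _ _ => rfl
    refine ⟨b.equivFun.trans (h17curry H N).symm, fun x y => ?_, fun s x => ?_⟩
    · rw [h17_le_iff hb]
      exact ⟨fun h i j c => h ⟨i, j, c⟩, fun h p => h p.1 p.2.1 p.2.2⟩
    · funext i j c
      have : (multiRep G H N s ((b.equivFun.trans (h17curry H N).symm) x)) i j c
        = b.repr x ⟨i, j, s⁻¹ • c⟩ := rfl
      rw [this, hr]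
      have hl : (b.coord ⟨i, j, c⟩).comp (ρ s).toLinearMap = b.coord ⟨i, j, s⁻¹ • c⟩ := by
        apply b.ext
        intro p
        simp only [LinearMap.comp_apply, LinearEquiv.coe_coe, Module.Basis.coord_apply, hbρ,
          b.repr_self, Finsupp.single_apply]
        congr 1
        apply propext
        constructor
        · intro h
          obtain ⟨i', j', c'⟩ := p
          simp only [h17act] at h
          obtain ⟨rfl, h⟩ := Sigma.mk.inj_iff.mp h
          simp only [heq_eq_eq, Prod.mk.injEq] at h
          obtain ⟨rfl, rfl⟩ := h
          simp
        · rintro rfl; simp [h17act]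
      exact LinearMap.congr_fun hl x

lemma h17_inv_basis [Finite G] {ι : Type*} [Finite ι] {b : Module.Basis ι ℝ E} (hb : H17Pos b)
    (ρ : G →* (E ≃ₗ[ℝ] E)) (hρ : IsPositiveRep ρ) :
    ∃ b' : Module.Basis ι ℝ E, H17Pos b' ∧ ∀ s i, ∃ j, ρ s (b' i) = b' j := by
  classical
  have := Fintype.ofFinite G
  have := Fintype.ofFinite ι
  let φ : E →ₗ[ℝ] ℝ := ∑ s : G, ∑ i, (b.coord i).comp (ρ s).toLinearMap
  have hφ : ∀ x, φ x = ∑ s : G, ∑ i, b.repr (ρ s x) i := fun x => by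
    simp [φ, LinearMap.sum_apply]
  have hφρ : ∀ t x, φ (ρ t x) = φ x := by
    intro t x
    rw [hφ, hφ]
    apply Fintype.sum_equiv (Equiv.mulRight t)
    intro s
    simp [map_mul]
  have hbi : ∀ i, 0 ≤ b i := fun i => (hb _).mpr fun j => by
    rw [b.repr_self, Finsupp.single_apply]; split_ifs <;> norm_num
  have hρ0 : ∀ s x, 0 ≤ x → 0 ≤ ρ s x := fun s x hx => by
    have := (hρ s 0 x).mp hx
    rwa [map_zero] at this
  have hφpos : ∀ i, 0 < φ (b i) := by
    intro i
    rw [hφ]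
    have hnn : ∀ s : G, 0 ≤ ∑ j, b.repr (ρ s (b i)) j := fun s =>
      Finset.sum_nonneg fun j _ => (hb _).mp (hρ0 s _ (hbi i)) j
    have h1 : ∑ j, b.repr (ρ 1 (b i)) j = 1 := by simp
    calc (0:ℝ) < 1 := one_pos
      _ = ∑ j, b.repr (ρ 1 (b i)) j := h1.symm
      _ ≤ _ := Finset.single_le_sum (f := fun s : G => ∑ j, b.repr (ρ s (b i)) j)
          (fun s _ => hnn s) (Finset.mem_univ 1)
  let w : ι → ℝˣ := fun i => (Units.mk0 (φ (b i)) (hφpos i).ne')⁻¹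
  let b' := b.unitsSMul w
  have hbval : ∀ i, b' i = (φ (b i))⁻¹ • b i := fun i => by
    simp [b', w, Module.Basis.unitsSMul_apply, Units.smul_def]
  have hb' : H17Pos b' := by
    intro v
    rw [hb]
    apply forall_congr'
    intro i
    have : b'.repr v i = φ (b i) * b.repr v i := by
      simp [b', w, Module.Basis.repr_unitsSMul, Units.smul_def]
    rw [this]
    exact (mul_nonneg_iff_of_pos_left (hφpos i)).symm
  have hφ1 : ∀ i, φ (b' i) = 1 := fun i => by
    rw [hbval, map_smul, smul_eq_mul, inv_mul_cancel₀ (hφpos i).ne']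
  refine ⟨b', hb', fun s i => ?_⟩
  have hmap : H17Pos (b'.map (ρ s)) := by
    intro v
    have h1 : 0 ≤ v ↔ 0 ≤ (ρ s).symm v := by
      have := hρ s 0 ((ρ s).symm v)
      rw [map_zero, LinearEquiv.apply_symm_apply] at this
      exact this.symm
    rw [h1, hb']
    rfl
  obtain ⟨j, c, hc, h⟩ := h17_two_bases hmap hb' i
  rw [Module.Basis.map_apply] at h
  have h2 := congrArg φ h
  rw [hφρ, hφ1, map_smul, hφ1, smul_eq_mul, mul_one] at h2
  exact ⟨j, by rw [h, ← h2, one_smul]⟩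

lemma h17_gset {X : Type*} [MulAction G X] [Finite X] {k : ℕ} (H : Fin k → Subgroup G)
    (hH : ∀ K : Subgroup G, ∃! i : Fin k, ∃ r : G, ∀ g : G, g ∈ K ↔ r * g * r⁻¹ ∈ H i) :
    ∃ (N : Fin k → ℕ) (F : H17Idx H N ≃ X), ∀ s p, F (h17act H N s p) = s • F p := by
  classical
  have h1 : ∀ ω : MulAction.orbitRel.Quotient G X, ∃ (i : Fin k) (x : X),
      (Quotient.mk'' x : MulAction.orbitRel.Quotient G X) = ω ∧
        ∀ g : G, g • x = x ↔ g ∈ H i := by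
    intro ω
    obtain ⟨x0, rfl⟩ := Quotient.mk''_surjective ω
    obtain ⟨i, ⟨r, hr⟩, -⟩ := hH (MulAction.stabilizer G x0)
    refine ⟨i, r • x0, ?_, fun g => ?_⟩
    · rw [Quotient.eq'']
      exact ⟨r, rfl⟩
    · have := hr (r⁻¹ * g * r)
      rw [MulAction.mem_stabilizer_iff] at this
      rw [show r * (r⁻¹ * g * r) * r⁻¹ = g by group] at this
      rw [← this, mul_smul, mul_smul, inv_smul_eq_iff]
  choose cls pt hpt hst using h1
  have hfin : ∀ i, Finite {ω : MulAction.orbitRel.Quotient G X // cls ω = i} := fun i =>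
    inferInstance
  let N : Fin k → ℕ := fun i => Nat.card {ω : MulAction.orbitRel.Quotient G X // cls ω = i}
  let eq : ∀ i, Fin (N i) ≃ {ω : MulAction.orbitRel.Quotient G X // cls ω = i} := fun i =>
    (Finite.equivFin _).symm
  have hwd : ∀ (i) (j : Fin (N i)) (a c : G), a • pt (eq i j).1 = c • pt (eq i j).1 ↔
      a⁻¹ * c ∈ H i := by
    intro i j a c
    have := hst (eq i j).1 (a⁻¹ * c)
    rw [(eq i j).2] at this
    rw [← this, mul_smul, inv_smul_eq_iff, eq_comm]
  let F : H17Idx H N → X := fun p => Quotient.liftOn' p.2.2 (fun g => g • pt (eq p.1 p.2.1).1)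
    (fun a c hac => (hwd p.1 p.2.1 a c).mpr (QuotientGroup.leftRel_apply.mp hac))
  have hF : ∀ i j (g : G), F ⟨i, j, (g : G ⧸ H i)⟩ = g • pt (eq i j).1 := fun _ _ _ => rfl
  have hbij : Function.Bijective F := by
    constructor
    · rintro ⟨i, j, c⟩ ⟨i', j', c'⟩ h
      obtain ⟨g, rfl⟩ := QuotientGroup.mk_surjective c
      obtain ⟨g', rfl⟩ := QuotientGroup.mk_surjective c'
      rw [hF, hF] at h
      have hω : (eq i j).1 = (eq i' j').1 := by
        rw [← hpt (eq i j).1, ← hpt (eq i' j').1, Quotient.eq'']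
        refine ⟨g⁻¹ * g', ?_⟩
        simp only [mul_smul]
        rw [← h, inv_smul_smul]
      have hi : i = i' := by rw [← (eq i j).2, ← (eq i' j').2, hω]
      subst hi
      have hj : j = j' := (eq i).injective (Subtype.ext hω)
      subst hj
      have := (hwd i j g g').mp h
      rw [QuotientGroup.eq.mpr this]
    · intro x
      let ω : MulAction.orbitRel.Quotient G X := Quotient.mk'' x
      have hx := hpt ω
      rw [eq_comm, Quotient.eq''] at hx
      obtain ⟨g, hg⟩ := hx
      refine ⟨⟨cls ω, (eq (cls ω)).symm ⟨ω, rfl⟩, (g : G ⧸ _)⟩, ?_⟩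
      rw [hF, Equiv.apply_symm_apply]
      exact hg
  refine ⟨N, Equiv.ofBijective F hbij, ?_⟩
  rintro s ⟨i, j, c⟩
  obtain ⟨g, rfl⟩ := QuotientGroup.mk_surjective c
  change F ⟨i, j, ((s * g : G) : G ⧸ H i)⟩ = s • F ⟨i, j, (g : G ⧸ H i)⟩
  rw [hF, hF, mul_smul]

/-- Points whose stabilizer is conjugate to `H i`. -/
def h17pts {k : ℕ} (H : Fin k → Subgroup G) (N : Fin k → ℕ) (i : Fin k) : Set (H17Idx H N) :=
  {p | ∃ r : G, ∀ g : G, h17act H N g p = p ↔ r * g * r⁻¹ ∈ H i}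

lemma h17_count [Finite G] {k : ℕ} (H : Fin k → Subgroup G)
    (hH : ∀ K : Subgroup G, ∃! i : Fin k, ∃ r : G, ∀ g : G, g ∈ K ↔ r * g * r⁻¹ ∈ H i)
    (N : Fin k → ℕ) (i : Fin k) :
    Nat.card (h17pts H N i) = N i * Nat.card (G ⧸ H i) := by
  have hstab : ∀ (i' : Fin k) (j : Fin (N i')) (a g : G),
      h17act H N g ⟨i', j, (a : G ⧸ H i')⟩ = ⟨i', j, (a : G ⧸ H i')⟩ ↔
        a⁻¹ * g * a⁻¹⁻¹ ∈ H i' := by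
    intro i' j a g
    have : h17act H N g ⟨i', j, (a : G ⧸ H i')⟩ = ⟨i', j, ((g * a : G) : G ⧸ H i')⟩ := rfl
    rw [this]
    simp only [Sigma.mk.injEq, heq_eq_eq, Prod.mk.injEq, true_and]
    rw [eq_comm, QuotientGroup.eq, inv_inv, mul_assoc]
  have hmem : ∀ p : H17Idx H N, p ∈ h17pts H N i ↔ p.1 = i := by
    rintro ⟨i', j, c⟩
    obtain ⟨a, rfl⟩ := QuotientGroup.mk_surjective c
    constructor
    · rintro ⟨r, hr⟩
      let K : Subgroup G := (H i').comap (MulAut.conj a⁻¹).toMonoidHom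
      have hK : ∀ g, g ∈ K ↔ a⁻¹ * g * a⁻¹⁻¹ ∈ H i' := fun g => by
        simp [K, Subgroup.mem_comap]
      exact (hH K).unique ⟨a⁻¹, hK⟩ ⟨r, fun g => by rw [hK, ← hr, hstab]⟩
    · rintro rfl
      exact ⟨a⁻¹, hstab _ j a⟩
  have hprod : N i * Nat.card (G ⧸ H i) = Nat.card (Fin (N i) × (G ⧸ H i)) := by simp
  rw [hprod]
  symm
  apply Nat.card_congr
  refine Equiv.ofBijective (fun q => ⟨⟨i, q⟩, (hmem _).mpr rfl⟩) ⟨?_, ?_⟩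
  · intro q q' h
    simpa using h
  · rintro ⟨⟨i', q⟩, hp⟩
    have := (hmem _).mp hp
    change i' = i at this
    subst this
    exact ⟨q, rfl⟩

lemma h17_le [Finite G] {k : ℕ} (H : Fin k → Subgroup G)
    (hH : ∀ K : Subgroup G, ∃! i : Fin k, ∃ r : G, ∀ g : G, g ∈ K ↔ r * g * r⁻¹ ∈ H i)
    (ρ : G →* (E ≃ₗ[ℝ] E)) (N M : Fin k → ℕ)
    (hN : ∃ b : Module.Basis (H17Idx H N) ℝ E, H17Pos b ∧
      ∀ s p, ρ s (b p) = b (h17act H N s p))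
    (hM : ∃ b : Module.Basis (H17Idx H M) ℝ E, H17Pos b ∧
      ∀ s p, ρ s (b p) = b (h17act H M s p)) (i : Fin k) : N i ≤ M i := by
  obtain ⟨b, hb, hbρ⟩ := hN
  obtain ⟨b', hb', hbρ'⟩ := hM
  choose σ c hc hσ using h17_two_bases hb hb'
  have hinj : Function.Injective σ := by
    intro p q hpq
    have h1 : b p = (c p * (c q)⁻¹) • b q := by
      rw [hσ p, hσ q, hpq, smul_smul, mul_assoc, inv_mul_cancel₀ (hc q).ne', mul_one]
    by_contra hne
    have h2 := congrArg (fun v => b.repr v p) h1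
    simp [Finsupp.single_eq_of_ne hne] at h2
  have hst : ∀ g p, h17act H N g p = p ↔ h17act H M g (σ p) = σ p := by
    intro g p
    rw [← b.injective.eq_iff, ← b'.injective.eq_iff, ← hbρ, ← hbρ', hσ p, map_smul]
    exact (smul_right_injective E (hc p).ne').eq_iff
  have hcard : Nat.card (h17pts H N i) ≤ Nat.card (h17pts H M i) := by
    apply Nat.card_le_card_of_injective
      (fun p : h17pts H N i => (⟨σ p.1, by
        obtain ⟨r, hr⟩ := p.2
        exact ⟨r, fun g => by rw [← hst, hr]⟩⟩ : h17pts H M i))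
    intro p q h
    exact Subtype.ext (hinj (congrArg Subtype.val h))
  rw [h17_count H hH, h17_count H hH] at hcard
  exact Nat.le_of_mul_le_mul_right hcard Nat.card_pos

end Helpers17G

/-- Every positive representation of a finite group `G` in a finite dimensional
Archimedean Riesz space is order equivalent to `n₁ π^{H₁} ⊕ ⋯ ⊕ n_k π^{H_k}` for unique
multiplicities `n₁, …, n_k`, where `H₁, …, H_k` represent the conjugacy classes of
subgroups of `G`. -/
theorem stmt17 {G E : Type*} [Group G] [Finite G] [AddCommGroup E] [Lattice E]
    [Module ℝ E] [FiniteDimensional ℝ E]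
    (hadd : ∀ x y z : E, x ≤ y → x + z ≤ y + z)
    (hsmul : ∀ (c : ℝ) (x : E), 0 ≤ c → 0 ≤ x → 0 ≤ c • x)
    (harch : RieszArchimedean E)
    (k : ℕ) (H : Fin k → Subgroup G)
    (hH : ∀ K : Subgroup G, ∃! i : Fin k, ∃ r : G, ∀ g : G, g ∈ K ↔ r * g * r⁻¹ ∈ H i)
    (ρ : G →* (E ≃ₗ[ℝ] E)) (hρ : IsPositiveRep ρ) :
    ∃! N : Fin k → ℕ, ∃ T : E ≃ₗ[ℝ] (∀ i : Fin k, Fin (N i) → (G ⧸ H i → ℝ)),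
      (∀ x y : E, x ≤ y ↔ T x ≤ T y) ∧
      ∀ (s : G) (x : E), T (ρ s x) = multiRep G H N s (T x) := by
  have : IsOrderedAddMonoid E := { add_le_add_left := fun a b h c => hadd a b c h }
  refine (existsUnique_congr fun N => h17_bridge H N ρ).mpr ?_
  obtain ⟨S, b0, hb0⟩ := h17_pos_basis (E := E) hsmul harch
  obtain ⟨b, hb, hbρ⟩ := h17_inv_basis hb0 ρ hρ
  choose σ hσ using hbρ
  let _ : MulAction G S :=
    { smul := σ
      one_smul := fun i => by
        apply b.injective
        change b (σ 1 i) = b i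
        rw [← hσ, map_one]; rfl
      mul_smul := fun s t i => by
        apply b.injective
        change b (σ (s * t) i) = b (σ s (σ t i))
        rw [← hσ, ← hσ, ← hσ, map_mul]; rfl }
  obtain ⟨N, F, hF⟩ := h17_gset (X := S) H hH
  have hN : ∃ b : Module.Basis (H17Idx H N) ℝ E, H17Pos b ∧
      ∀ s p, ρ s (b p) = b (h17act H N s p) := by
    refine ⟨b.reindex F.symm, fun v => ?_, fun s p => ?_⟩
    · rw [hb]
      simp only [Module.Basis.repr_reindex_apply, Equiv.symm_symm]
      exact ⟨fun h p => h (F p), fun h i => by simpa using h (F.symm i)⟩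
    · simp only [Module.Basis.reindex_apply, Equiv.symm_symm, hF]
      exact hσ s (F p)
  refine ⟨N, hN, fun M hM => ?_⟩
  funext i
  exact le_antisymm (h17_le H hH ρ M N hM hN i) (h17_le H hH ρ N M hN hM i)
end

section
/- Let G be a group, E a Riesz space, and ρ : G → Aut⁺(E) a positive representation. Suppose F is a Riesz subspace of E (a linear subspace closed under the lattice operations) that is invariant under ρ_t for all t in a subgroup H of G, let θ = ρ|_H acting on F, and let R be a set of representatives of the left cosets G/H such that E is the order direct sum ⊕_{r ∈ R} ρ_r(F). Then for every Riesz space E', every positive representation ρ' : G → Aut⁺(E'), and every positive linear map T : F → E' satisfying T ∘ θ_t = ρ'_t ∘ T for all t ∈ H, there exists a unique positive linear map T̄ : E → E' extending T and satisfying T̄ ∘ ρ_s = ρ'_s ∘ T̄ for all s ∈ G. -/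
universe u

/-- The universal property of induced ordered modules: if `F` is an `H`-invariant Riesz
subspace of `E` with `E = ⊕_{r ∈ R} ρ_r(F)` (for `R` a system of representatives of
`G/H`), then every positive linear map `T : F → E'` intertwining `ρ|_H` with a positive
representation `ρ'` of `G` extends uniquely to a positive linear map `T̄ : E → E'`
intertwining `ρ` with `ρ'`. -/
theorem stmt19 {G E : Type*} [Group G] [AddCommGroup E] [Lattice E] [Module ℝ E]
    (hadd : ∀ x y z : E, x ≤ y → x + z ≤ y + z)
    (hsmul : ∀ (c : ℝ) (x : E), 0 ≤ c → 0 ≤ x → 0 ≤ c • x)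
    (ρ : G →* (E ≃ₗ[ℝ] E)) (hρ : IsPositiveRep ρ)
    (H : Subgroup G) (F : Submodule ℝ E)
    (hsub : ∀ x y : E, x ∈ F → y ∈ F → x ⊔ y ∈ F ∧ x ⊓ y ∈ F)
    (hinv : ∀ t ∈ H, ∀ x ∈ F, ρ t x ∈ F)
    (R : Set G) (hR : ∀ s : G, ∃! r : G, r ∈ R ∧ r⁻¹ * s ∈ H)
    (hdirect : IsInternalOrderDirectSum fun r : R => F.map (ρ (r : G)).toLinearMap) :
    ∀ (E' : Type u) [AddCommGroup E'] [Lattice E'] [Module ℝ E'],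
      (∀ x y z : E', x ≤ y → x + z ≤ y + z) →
      (∀ (c : ℝ) (x : E'), 0 ≤ c → 0 ≤ x → 0 ≤ c • x) →
      ∀ (ρ' : G →* (E' ≃ₗ[ℝ] E')), IsPositiveRep ρ' →
      ∀ T : F →ₗ[ℝ] E',
        (∀ x : F, 0 ≤ (x : E) → 0 ≤ T x) →
        (∀ (t : G) (ht : t ∈ H) (x : F), T ⟨ρ t x, hinv t ht x x.2⟩ = ρ' t (T x)) →
        ∃! Tbar : E →ₗ[ℝ] E',
          (∀ x : E, 0 ≤ x → 0 ≤ Tbar x) ∧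
          (∀ x : F, Tbar x = T x) ∧
          ∀ (s : G) (x : E), Tbar (ρ s x) = ρ' s (Tbar x) := by
  intro E' _ _ _ hadd' hsmul' ρ' hρ' T hT hTH
  obtain ⟨h1, h2, h3⟩ := hdirect
  have : IsOrderedAddMonoid E' :=
    { add_le_add_left := fun a b h c => hadd' a b c h }
  let Φ : (R →₀ F) →ₗ[ℝ] E :=
    Finsupp.lsum ℝ (fun r : R => (ρ (r : G)).toLinearMap ∘ₗ F.subtype)
  let Ψ : (R →₀ F) →ₗ[ℝ] E' :=
    Finsupp.lsum ℝ (fun r : R => (ρ' (r : G)).toLinearMap ∘ₗ T)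
  have Φs : ∀ (r : R) (x : F), Φ (Finsupp.single r x) = ρ (r : G) (x : E) := by
    intro r x
    simp [Φ]
  have Ψs : ∀ (r : R) (x : F), Ψ (Finsupp.single r x) = ρ' (r : G) (T x) := by
    intro r x
    simp [Ψ]
  have key : ∀ g : R →₀ F, ∃ f : R →₀ E, (∀ r, f r = ρ (r : G) (g r : E)) ∧
      f.sum (fun _ v => v) = Φ g := by
    intro g
    refine ⟨Finsupp.onFinset g.support (fun r => ρ (r : G) (g r : E)) ?_, fun r => rfl, ?_⟩
    · intro r hr
      rw [Finsupp.mem_support_iff]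
      intro h
      apply hr
      simp [h]
    · rw [Finsupp.onFinset_sum _ (fun _ => rfl)]
      simp [Φ, Finsupp.sum]
  have hmem : ∀ (g : R →₀ F) (f : R →₀ E), (∀ r, f r = ρ (r : G) (g r : E)) →
      ∀ r : R, f r ∈ F.map (ρ (r : G)).toLinearMap := by
    intro g f hf r
    rw [hf]
    exact ⟨g r, (g r).2, rfl⟩
  have hinj : Function.Injective Φ := by
    rw [injective_iff_map_eq_zero]
    intro g hg
    obtain ⟨f, hf, hs⟩ := key g
    have h0 := h2 f (hmem g f hf) (hs.trans hg)
    ext r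
    have := hf r
    rw [h0] at this
    simpa using this.symm
  have hsurj : Function.Surjective Φ := by
    intro x
    obtain ⟨f, hf, rfl⟩ := h1 x
    rw [← LinearMap.mem_range]
    refine Submodule.sum_mem _ fun r _ => ?_
    obtain ⟨y, hy, hyr⟩ := hf r
    exact ⟨Finsupp.single r ⟨y, hy⟩, (Φs r ⟨y, hy⟩).trans hyr⟩
  let e := LinearEquiv.ofBijective Φ ⟨hinj, hsurj⟩
  let S : E →ₗ[ℝ] E' := Ψ ∘ₗ e.symm.toLinearMap
  have hS : ∀ g, S (Φ g) = Ψ g := by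
    intro g
    have : e.symm (Φ g) = g := e.symm_apply_apply g
    simp [S, this]
  have hkey : ∀ (s : G) (x : F), S (ρ s (x : E)) = ρ' s (T x) := by
    intro s x
    obtain ⟨r, ⟨hr, ht⟩, -⟩ := hR s
    have hs : s = r * (r⁻¹ * s) := by group
    have e1 : ρ s (x : E) = Φ (Finsupp.single ⟨r, hr⟩ ⟨ρ (r⁻¹ * s) x, hinv _ ht x x.2⟩) := by
      rw [Φs]
      conv_lhs => rw [hs, map_mul]
      rfl
    rw [e1, hS, Ψs, hTH _ ht]
    conv_rhs => rw [hs, map_mul]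
    rfl
  refine ⟨S, ⟨?_, ?_, ?_⟩, ?_⟩
  · intro x hx
    obtain ⟨g, rfl⟩ := hsurj x
    obtain ⟨f, hf, hs⟩ := key g
    rw [← hs] at hx
    have hp := (h3 f (hmem g f hf)).1 hx
    rw [hS]
    have : Ψ g = g.sum fun r y => ρ' (r : G) (T y) := by
      simp [Ψ]
      rfl
    rw [this]
    refine Finset.sum_nonneg fun r _ => ?_
    have hg : (0 : E) ≤ (g r : E) := by
      rw [hρ (r : G), map_zero, ← hf]
      exact hp r
    have := (hρ' (r : G) _ _).1 (hT _ hg)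
    rwa [map_zero] at this
  · intro x
    have := hkey 1 x
    simpa using this
  · intro s x
    obtain ⟨g, rfl⟩ := hsurj x
    induction g using Finsupp.induction_linear with
    | zero => simp
    | add a b ha hb => simp only [map_add, ha, hb]
    | single r y =>
      rw [Φs, hkey]
      have e1 : ρ s (ρ (r : G) (y : E)) = ρ (s * r) (y : E) := by rw [map_mul]; rfl
      rw [e1, hkey, map_mul]
      rfl
  · rintro S' ⟨-, hS1, hS2⟩
    ext x
    obtain ⟨g, rfl⟩ := hsurj x
    induction g using Finsupp.induction_linear with
    | zero => simp
    | add a b ha hb => simp only [map_add, ha, hb]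
    | single r y => rw [Φs, hkey, hS2, hS1]
end
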